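/- arXiv:2212.08644 — 3 statements merged into one kernel-verified Lean document; each statement's English description precedes it below -/
import Mathlib

section
/- Spreading out flatness over a Henselian pair: let (A, I) be a Henselian pair and let R be a finitely presented A-algebra such that for every prime ideal q of R containing I·R, the localization R_q of R at q is flat as an A-module (i.e. Spec R → Spec A is flat at every point of V(I·R)). Then there exists an étale R-algebra R′ such that the induced map R/(I·R) → R′/(I·R′) is an isomorphism and R′ is flat as an A-module. -/
universe u

/-- A ring homomorphism `ρ : R →+* H` exhibits `H` as a Henselization of the pair `(R, K)`:
`(H, K·H)` is a Henselian pair, and every map from `(R, K)` to a Henselian pair factors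
uniquely through `ρ`. -/
def IsHenselization {R H : Type u} [CommRing R] [CommRing H]
    (K : Ideal R) (ρ : R →+* H) : Prop :=
  HenselianRing H (K.map ρ) ∧
    ∀ (C : Type u) [CommRing C] (J : Ideal C), HenselianRing C J →
      ∀ f : R →+* C, K.map f ≤ J → ∃! g : H →+* C, g.comp ρ = f

/-- `φ : A →+* B` is Henselian finitely presented (hfp) with respect to `I`:
`B` is a Henselization of `(R, I·R)` for some finitely presented `A`-algebra `R`. -/
def IsHfp {A B : Type u} [CommRing A] [CommRing B] (φ : A →+* B) (I : Ideal A) : Prop :=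
  ∃ (R : Type u) (_ : CommRing R) (ψ : A →+* R) (ρ : R →+* B),
    ψ.FinitePresentation ∧ ρ.comp ψ = φ ∧ IsHenselization (I.map ψ) ρ

/-- `φ : A →+* B` is h-formally étale with respect to `I`. -/
def IsHFormallyEtale {A B : Type u} [CommRing A] [CommRing B] (φ : A →+* B) (I : Ideal A) :
    Prop :=
  ∀ (E C : Type u) [CommRing E] [CommRing C] (e : A →+* E) (c : A →+* C)
    (p : E →+* C) (u : B →+* C),
    p.comp e = c → u.comp φ = c →
    (∃ N : ℕ, 1 ≤ N ∧ Ideal.map e (I ^ N) = ⊥ ∧ Ideal.map c (I ^ N) = ⊥) →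
    Function.Surjective p →
    (∃ M : ℕ, 1 ≤ M ∧ RingHom.ker p ^ M = ⊥) →
    ∃! v : B →+* E, v.comp φ = e ∧ p.comp v = u

/-- `φ : A →+* B` is h-formally smooth with respect to `I`. -/
def IsHFormallySmooth {A B : Type u} [CommRing A] [CommRing B] (φ : A →+* B) (I : Ideal A) :
    Prop :=
  ∀ (E C : Type u) [CommRing E] [CommRing C] (e : A →+* E) (c : A →+* C)
    (p : E →+* C) (u : B →+* C),
    p.comp e = c → u.comp φ = c →
    (∃ N : ℕ, 1 ≤ N ∧ Ideal.map e (I ^ N) = ⊥ ∧ Ideal.map c (I ^ N) = ⊥) →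
    Function.Surjective p →
    (∃ M : ℕ, 1 ≤ M ∧ RingHom.ker p ^ M = ⊥) →
    ∃ v : B →+* E, v.comp φ = e ∧ p.comp v = u

/-- `φ : A →+* B` is h-étale with respect to `I`: `B` is a Henselization of `(R, I·R)`
for some étale `A`-algebra `R`. -/
def IsHEtale {A B : Type u} [CommRing A] [CommRing B] (φ : A →+* B) (I : Ideal A) : Prop :=
  ∃ (R : Type u) (_ : CommRing R) (_ : Algebra A R) (ρ : R →+* B),
    Algebra.Etale A R ∧ ρ.comp (algebraMap A R) = φ ∧
      IsHenselization (I.map (algebraMap A R)) ρ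

/-- `φ : A →+* B` is h-smooth with respect to `I`: `B` is a Henselization of `(R, I·R)`
for some smooth `A`-algebra `R`. -/
def IsHSmooth {A B : Type u} [CommRing A] [CommRing B] (φ : A →+* B) (I : Ideal A) : Prop :=
  ∃ (R : Type u) (_ : CommRing R) (_ : Algebra A R) (ρ : R →+* B),
    Algebra.Smooth A R ∧ ρ.comp (algebraMap A R) = φ ∧
      IsHenselization (I.map (algebraMap A R)) ρ

/-- A ring homomorphism is flat if it makes the target into a flat module over the source. -/
def RingHomFlat {A C : Type u} [CommRing A] [CommRing C] (f : A →+* C) : Prop :=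
  letI := f.toAlgebra
  Module.Flat A C

/-- A ring homomorphism is smooth if it makes the target into a smooth algebra over the
source (smooth = formally smooth + finitely presented). -/
def RingHomSmooth {A C : Type u} [CommRing A] [CommRing C] (f : A →+* C) : Prop :=
  letI := f.toAlgebra
  Algebra.Smooth A C

/-- A ring homomorphism is étale if it makes the target into an étale algebra over the
source (étale = formally étale + finitely presented). -/
def RingHomEtale {A C : Type u} [CommRing A] [CommRing C] (f : A →+* C) : Prop :=
  letI := f.toAlgebra
  Algebra.Etale A C

/-! The set of points of `Spec R` at which a finitely presented `A`-algebra `R` is flat is open.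
Hence it contains `D(f)` for some `f ∈ 1 + I·R`, and `R' = R[1/f]` is étale over `R`,
flat over `A`, and unchanged modulo `I·R`.

For Noetherian `A`, openness follows from stability under generalization and the local criterion
of flatness: for a prime `p` of `A`, generic flatness makes `R ⧸ pR` flat over `A ⧸ p` after
inverting an element outside `p`, while the kernel of `p ⊗ R → R` is a finite `R`-module which
vanishes near every flat point over `p`.

The general case is reduced to this one by writing `R = A ⊗ R₀` with `R₀` of finite type over a
Noetherian `A₀`, and `A` as a filtered union of finitely generated `A₀`-subalgebras `B`. A flat
point of `R` is already flat over some `B`: by the local criterion it suffices that finitely many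
relations, which generate the kernel of `pB ⊗ R₀ → B ⊗ R₀`, become trivial. -/

open TensorProduct

section LocalCriterion
variable {A : Type*} [CommRing A]

theorem lTensor_injective_of_flat_baseChange {M : Type*} [AddCommGroup M] [Module A M]
    (B : Type*) [CommRing B] [Algebra A B] [Module.Flat B (B ⊗[A] M)]
    {X Y : Type*} [AddCommGroup X] [Module A X] [Module B X] [IsScalarTower A B X]
    [AddCommGroup Y] [Module A Y] [Module B Y] [IsScalarTower A B Y] (f : Y →ₗ[B] X)
    (hf : Function.Injective f) : Function.Injective ((f.restrictScalars A).lTensor M) := by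
  have natural : AlgebraTensorModule.rTensor A M f ∘ₗ
        (AlgebraTensorModule.cancelBaseChange A B B Y M).toLinearMap =
      (AlgebraTensorModule.cancelBaseChange A B B X M).toLinearMap ∘ₗ f.rTensor (B ⊗[A] M) := by
    ext; simp
  rw [LinearMap.lTensor_inj_iff_rTensor_inj]
  refine .of_comp_right (g := AlgebraTensorModule.cancelBaseChange A B B Y M) ?_
    (LinearEquiv.surjective _)
  change Function.Injective (AlgebraTensorModule.rTensor A M f ∘ₗ
    (AlgebraTensorModule.cancelBaseChange A B B Y M).toLinearMap)
  rw [natural]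
  exact (AlgebraTensorModule.cancelBaseChange A B B X M).injective.comp
    (Module.Flat.rTensor_preserves_injective_linearMap f hf)

theorem lTensor_injective_of_flat_quotient {I : Ideal A} {M : Type*} [AddCommGroup M] [Module A M]
    [Module.Flat (A ⧸ I) ((A ⧸ I) ⊗[A] M)] {X Y : Type*} [AddCommGroup X] [Module A X]
    [AddCommGroup Y] [Module A Y] (f : Y →ₗ[A] X) (hf : Function.Injective f)
    (hX : Module.IsTorsionBySet A X I) : Function.Injective (f.lTensor M) := by
  have hY : Module.IsTorsionBySet A Y I := fun y a ↦ hf <| by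
    rw [map_smul, map_zero, hX]
  let := hX.module
  let := hY.module
  have := hX.isScalarTower (S := A)
  have := hY.isScalarTower (S := A)
  exact lTensor_injective_of_flat_baseChange (A ⧸ I)
    (f.extendScalarsOfSurjective Ideal.Quotient.mk_surjective) hf

-- An arbitrary lift `l` of `k` is corrected by an element of `M ⊗ ker (π ∘ j)`.
theorem exists_lift_lTensor_eq_zero {M E C D W : Type*}
    [AddCommGroup M] [Module A M] [AddCommGroup E] [Module A E] [AddCommGroup C] [Module A C]
    [AddCommGroup D] [Module A D] [AddCommGroup W] [Module A W]
    {j : E →ₗ[A] C} {π : C →ₗ[A] W} {ρ : E →ₗ[A] D} {ι : D →ₗ[A] W}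
    (comm : ι ∘ₗ ρ = π ∘ₗ j) (hι : Function.Injective ι) (hπ : Function.Surjective π)
    (hρ : Function.Surjective ρ)
    (hM : ∀ U : Submodule A (C ⧸ LinearMap.range j), Function.Injective (U.subtype.lTensor M))
    {k : M ⊗[A] D} (hk : ι.lTensor M k = 0) :
    ∃ l : M ⊗[A] E, j.lTensor M l = 0 ∧ ρ.lTensor M l = k := by
  obtain ⟨l, rfl⟩ := LinearMap.lTensor_surjective M hρ k
  set N := LinearMap.ker π
  let q := (LinearMap.range j).mkQ ∘ₗ N.subtype
  let i : LinearMap.ker (π ∘ₗ j) →ₗ[A] N := (j.domRestrict _).codRestrict N fun x ↦ x.2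
  obtain ⟨n, hn⟩ : ∃ n, N.subtype.lTensor M n = j.lTensor M l := by
    refine (lTensor_exact M (LinearMap.exact_subtype_ker_map π) hπ _).1 ?_
    rw [← LinearMap.lTensor_comp_apply, ← comm, LinearMap.lTensor_comp_apply, hk]
  have hqn : q.rangeRestrict.lTensor M n = 0 := by
    refine hM (LinearMap.range q) ?_
    rw [map_zero, ← LinearMap.lTensor_comp_apply, LinearMap.subtype_comp_codRestrict,
      LinearMap.lTensor_comp_apply, hn, ← LinearMap.lTensor_comp_apply,
      LinearMap.range_mkQ_comp, LinearMap.lTensor_zero, LinearMap.zero_apply]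
  have hi : Function.Exact i q.rangeRestrict := fun c ↦ by
    rw [← Subtype.coe_inj]
    change (LinearMap.range j).mkQ c = 0 ↔ _
    rw [Submodule.mkQ_apply, Submodule.Quotient.mk_eq_zero]
    constructor
    · rintro ⟨e, he⟩
      exact ⟨⟨e, by simp [he]⟩, Subtype.ext he⟩
    · rintro ⟨e, rfl⟩
      exact ⟨e, rfl⟩
  obtain ⟨e, rfl⟩ := (lTensor_exact M hi q.surjective_rangeRestrict n).1 hqn
  refine ⟨l - (LinearMap.ker (π ∘ₗ j)).subtype.lTensor M e, ?_, ?_⟩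
  · rw [map_sub, ← hn, ← LinearMap.lTensor_comp_apply, ← LinearMap.lTensor_comp_apply]
    exact sub_self _
  · have : ρ ∘ₗ (LinearMap.ker (π ∘ₗ j)).subtype = 0 :=
      LinearMap.ext fun x ↦ hι <| (LinearMap.congr_fun comm x.1).trans <| by simp
    rw [map_sub, ← LinearMap.lTensor_comp_apply, this, LinearMap.lTensor_zero,
      LinearMap.zero_apply, sub_zero]

/-- The map `I → I • W` sending `i` to `i • w`. -/
def idealSMulRight {W : Type*} [AddCommGroup W] [Module A W] (I : Ideal A) (w : W) :
    I →ₗ[A] (I • ⊤ : Submodule A W) :=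
  ((LinearMap.toSpanSingleton A W w).domRestrict I).codRestrict _ fun i ↦
    Submodule.smul_mem_smul i.2 trivial

theorem ker_lTensor_smul_top_le_of_finsupp (I : Ideal A) {M ι : Type*} [AddCommGroup M]
    [Module A M] : LinearMap.ker ((I • ⊤ : Submodule A (ι →₀ A)).subtype.lTensor M) ≤
      ⨆ w : ι →₀ A, (LinearMap.ker (I.subtype.lTensor M)).map ((idealSMulRight I w).lTensor M) := by
  classical
  intro k hk
  let E : Submodule A (ι →₀ A) := I • ⊤
  have hE (i : ι) : E ≤ Submodule.comap (Finsupp.lapply i) I :=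
    Submodule.smul_le.2 fun a ha c _ ↦ I.mul_mem_right _ ha
  let coord (i : ι) : E →ₗ[A] I := (Finsupp.lapply i).restrict (hE i)
  have hcoord (i) : (coord i).lTensor M k ∈ LinearMap.ker (I.subtype.lTensor M) := by
    rw [LinearMap.mem_ker, ← LinearMap.lTensor_comp_apply,
      show I.subtype ∘ₗ coord i = Finsupp.lapply i ∘ₗ E.subtype from rfl,
      LinearMap.lTensor_comp_apply, LinearMap.mem_ker.1 hk, map_zero]
  have hsum (k : M ⊗[A] E) : ∀ᶠ s : Finset ι in Filter.atTop, ∑ i ∈ s,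
      (idealSMulRight I (Finsupp.single i (1 : A))).lTensor M ((coord i).lTensor M k) = k := by
    induction k using TensorProduct.induction_on with
    | zero => simp
    | add k l hk hl =>
      filter_upwards [hk, hl] with s hk hl
      simp only [map_add, Finset.sum_add_distrib, hk, hl]
    | tmul m c =>
      have hterm (i : ι) : (idealSMulRight I (Finsupp.single i (1 : A)) (coord i c) : ι →₀ A) =
          Finsupp.single i (c.1 i) := Finsupp.smul_single_one i (c.1 i)
      filter_upwards [Filter.eventually_ge_atTop c.1.support] with s hs
      simp only [LinearMap.lTensor_tmul, ← tmul_sum]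
      congr 1
      ext1
      rw [Submodule.coe_sum, Finset.sum_congr rfl fun i _ ↦ hterm i]
      exact (Finsupp.sum_of_support_subset _ hs _ fun i _ ↦ Finsupp.single_zero i).symm.trans
        c.1.sum_single
  obtain ⟨s, hs⟩ := (hsum k).exists
  rw [← hs]
  exact sum_mem fun i _ ↦ Submodule.mem_iSup_of_mem _ ⟨_, hcoord i, rfl⟩

theorem ker_lTensor_smul_top_le (I : Ideal A) {M W : Type*} [AddCommGroup M] [Module A M]
    [Module.Flat (A ⧸ I) ((A ⧸ I) ⊗[A] M)] [AddCommGroup W] [Module A W] :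
    LinearMap.ker ((I • ⊤ : Submodule A W).subtype.lTensor M) ≤
      ⨆ w : W, (LinearMap.ker (I.subtype.lTensor M)).map ((idealSMulRight I w).lTensor M) := by
  intro k hk
  let π : (W →₀ A) →ₗ[A] W := Finsupp.linearCombination A id
  have hπ : Function.Surjective π := Finsupp.linearCombination_id_surjective A W
  have hmap : (I • ⊤ : Submodule A (W →₀ A)).map π = I • ⊤ := by
    rw [Submodule.map_smul'', Submodule.map_top, LinearMap.range_eq_top.2 hπ]
  let ρ : (I • ⊤ : Submodule A (W →₀ A)) →ₗ[A] (I • ⊤ : Submodule A W) :=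
    π.restrict (Submodule.map_le_iff_le_comap.1 hmap.le)
  have hρ : Function.Surjective ρ := by
    rintro ⟨w, hw⟩
    obtain ⟨c, hc, rfl⟩ := hmap.ge hw
    exact ⟨⟨c, hc⟩, rfl⟩
  have htors : Module.IsTorsionBySet A ((W →₀ A) ⧸
      LinearMap.range (Submodule.subtype (I • ⊤ : Submodule A (W →₀ A)))) I := by
    rw [Submodule.range_subtype]
    exact Module.isTorsionBySet_quotient_ideal_smul _ I
  obtain ⟨l, hl, rfl⟩ := exists_lift_lTensor_eq_zero (M := M) (ρ := ρ)
    (j := Submodule.subtype _) (π := π) (ι := Submodule.subtype _) rfl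
    (Submodule.subtype_injective _) hπ hρ
    (fun U ↦ lTensor_injective_of_flat_quotient (I := I) _ U.subtype_injective htors) hk
  have hle : (⨆ c : W →₀ A, (LinearMap.ker (I.subtype.lTensor M)).map
        ((idealSMulRight I c).lTensor M)).map (ρ.lTensor M) ≤
      ⨆ w : W, (LinearMap.ker (I.subtype.lTensor M)).map ((idealSMulRight I w).lTensor M) := by
    rw [Submodule.map_iSup]
    refine iSup_le fun c ↦ le_iSup_of_le (π c) ?_
    rw [← Submodule.map_comp, ← LinearMap.lTensor_comp,
      show ρ ∘ₗ idealSMulRight I c = idealSMulRight I (π c) from LinearMap.ext fun i ↦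
        Subtype.ext (π.map_smul i.1 c)]
  exact hle (Submodule.mem_map_of_mem (ker_lTensor_smul_top_le_of_finsupp I hl))

theorem exact_inclusion_submoduleMap_mkQ {X : Type*} [AddCommGroup X] [Module A X]
    {U Y : Submodule A X} (h : U ≤ Y) :
    Function.Exact (Submodule.inclusion h) (U.mkQ.submoduleMap Y) := fun y ↦ by
  rw [← Subtype.coe_inj]
  change U.mkQ y = 0 ↔ _
  rw [Submodule.mkQ_apply, Submodule.Quotient.mk_eq_zero]
  exact ⟨fun hy ↦ ⟨⟨y, hy⟩, rfl⟩, by rintro ⟨u, rfl⟩; exact u.2⟩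

section Torsion
variable {I : Ideal A} {M X : Type*} [AddCommGroup M] [Module A M]
  [Module.Flat (A ⧸ I) ((A ⧸ I) ⊗[A] M)] [AddCommGroup X] [Module A X]

theorem lTensor_smul_top_subtype_injective (hM : Function.Injective (I.subtype.lTensor M)) :
    Function.Injective ((I • ⊤ : Submodule A X).subtype.lTensor M) := by
  rw [← LinearMap.ker_eq_bot, eq_bot_iff]
  refine (ker_lTensor_smul_top_le I).trans (iSup_le fun w ↦ ?_)
  rw [LinearMap.ker_eq_bot.2 hM, Submodule.map_bot]

theorem lTensor_subtype_injective_of_smul_top_le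
    (hM : Function.Injective (I.subtype.lTensor M)) (Y : Submodule A X) (hY : I • ⊤ ≤ Y) :
    Function.Injective (Y.subtype.lTensor M) := by
  rw [injective_iff_map_eq_zero]
  intro y hy
  let U := (I • ⊤ : Submodule A X)
  have hquot : (Y.map U.mkQ).subtype ∘ₗ U.mkQ.submoduleMap Y = U.mkQ ∘ₗ Y.subtype := rfl
  obtain ⟨u, rfl⟩ := (lTensor_exact M (exact_inclusion_submoduleMap_mkQ hY)
    (U.mkQ.submoduleMap_surjective Y) y).1 <|
    lTensor_injective_of_flat_quotient _ (Y.map U.mkQ).subtype_injective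
      (Module.isTorsionBySet_quotient_ideal_smul _ I) <| by
    rw [map_zero, ← LinearMap.lTensor_comp_apply, hquot, LinearMap.lTensor_comp_apply, hy, map_zero]
  rw [← LinearMap.lTensor_comp_apply, Submodule.subtype_comp_inclusion] at hy
  rw [lTensor_smul_top_subtype_injective hM (hy.trans (map_zero _).symm), map_zero]

theorem lTensor_subtype_injective_of_pow_smul_top_le
    (hM : Function.Injective (I.subtype.lTensor M)) (Y : Submodule A X) (n : ℕ)
    (hY : I ^ n • ⊤ ≤ Y) : Function.Injective (Y.subtype.lTensor M) := by
  induction n generalizing X with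
  | zero =>
    obtain rfl : Y = ⊤ := by simpa using hY
    exact ((Submodule.topEquiv (R := A) (M := X)).lTensor M).injective
  | succ n ih =>
    let Z : Submodule A X := Y ⊔ I • ⊤
    have hYZ : Y ≤ Z := le_sup_left
    have hZ : I ^ n • (⊤ : Submodule A Z) ≤ Y.submoduleOf Z := by
      refine Submodule.map_le_iff_le_comap.1 ?_
      rw [Submodule.map_smul'', Submodule.map_top, Submodule.range_subtype, Submodule.smul_sup,
        ← Submodule.mul_smul, ← pow_succ]
      exact sup_le Submodule.smul_le_right hY
    have hinj : Function.Injective ((Submodule.inclusion hYZ).lTensor M) := by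
      rw [show Submodule.inclusion hYZ = (Y.submoduleOf Z).subtype ∘ₗ
        (Submodule.submoduleOfEquivOfLe hYZ).symm.toLinearMap from rfl, LinearMap.lTensor_comp]
      exact (ih _ hZ).comp ((Submodule.submoduleOfEquivOfLe hYZ).symm.lTensor M).injective
    rw [← Submodule.subtype_comp_inclusion Y Z hYZ, LinearMap.lTensor_comp]
    exact (lTensor_subtype_injective_of_smul_top_le hM Z le_sup_right).comp hinj

theorem exists_lTensor_inclusion_eq (hM : Function.Injective (I.subtype.lTensor M))
    (Y : Submodule A X) {x : M ⊗[A] Y} (hx : Y.subtype.lTensor M x = 0) (n : ℕ) :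
    ∃ v, (Submodule.inclusion (inf_le_right : I ^ n • ⊤ ⊓ Y ≤ Y)).lTensor M v = x := by
  let U : Submodule A X := I ^ n • ⊤
  let Z : Submodule A X := U ⊔ Y
  have hYZ : Y ≤ Z := le_sup_right
  let q : Y →ₗ[A] Z ⧸ U.submoduleOf Z := (U.submoduleOf Z).mkQ ∘ₗ Submodule.inclusion hYZ
  have hq : Function.Surjective q := by
    rintro ⟨z, hz⟩
    obtain ⟨u, hu, y, hy, rfl⟩ := Submodule.mem_sup.1 hz
    exact ⟨⟨y, hy⟩, (Submodule.Quotient.eq _).2 <|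
      show y - (u + y) ∈ U by simpa using hu⟩
  have hexact : Function.Exact (Submodule.inclusion (inf_le_right : U ⊓ Y ≤ Y)) q := fun y ↦ by
    change (U.submoduleOf Z).mkQ _ = 0 ↔ _
    rw [Submodule.mkQ_apply, Submodule.Quotient.mk_eq_zero]
    exact ⟨fun h ↦ ⟨⟨y, h, y.2⟩, rfl⟩, by rintro ⟨u, rfl⟩; exact u.2.1⟩
  refine (lTensor_exact M hexact hq x).1 ?_
  have hZ : (Submodule.inclusion hYZ).lTensor M x = 0 := by
    refine lTensor_subtype_injective_of_pow_smul_top_le hM Z n le_sup_left ?_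
    rw [← LinearMap.lTensor_comp_apply, Submodule.subtype_comp_inclusion, hx, map_zero]
  rw [LinearMap.lTensor_comp_apply, hZ, map_zero]

end Torsion

theorem lTensor_smul_top_subtype_mem (I : Ideal A) {B M N : Type*} [CommRing B] [Algebra A B]
    [AddCommGroup M] [Module A M] [Module B M] [IsScalarTower A B M] [AddCommGroup N] [Module A N]
    (v : M ⊗[A] (I • ⊤ : Submodule A N)) : (I • ⊤ : Submodule A N).subtype.lTensor M v ∈
      (I.map (algebraMap A B) • ⊤ : Submodule B (M ⊗[A] N)) := by
  induction v using TensorProduct.induction_on with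
  | zero => rw [map_zero]; exact zero_mem _
  | add v w hv hw => rw [map_add]; exact add_mem hv hw
  | tmul m u =>
    obtain ⟨u, hu⟩ := u
    change m ⊗ₜ u ∈ _
    induction hu using Submodule.smul_induction_on' with
    | smul i hi w _ =>
      rw [tmul_smul, ← algebraMap_smul B i (m ⊗ₜ[A] w)]
      exact Submodule.smul_mem_smul (Ideal.mem_map_of_mem _ hi) trivial
    | add u hu w hw ihu ihw => rw [tmul_add]; exact add_mem ihu ihw

theorem flat_of_flat_quotient_of_lTensor_injective (I : Ideal A) {B : Type*} (M : Type*)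
    [CommRing B] [Algebra A B] [AddCommGroup M] [Module A M] [Module B M] [IsScalarTower A B M]
    [IsNoetherianRing A] [IsNoetherianRing B] [Module.Finite B M]
    (hI : I.map (algebraMap A B) ≤ Ideal.jacobson ⊥)
    [Module.Flat (A ⧸ I) ((A ⧸ I) ⊗[A] M)] (hM : Function.Injective (I.subtype.lTensor M)) :
    Module.Flat A M := by
  rw [Module.Flat.iff_lTensor_injective']
  intro J
  rw [injective_iff_map_eq_zero]
  intro x hx
  have : Module.Finite B (M ⊗[A] J) :=
    .equiv (AlgebraTensorModule.cancelBaseChange A B B M J)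
  have hmem (n : ℕ) : x ∈ (I.map (algebraMap A B) ^ n • ⊤ : Submodule B (M ⊗[A] J)) := by
    obtain ⟨c, hc⟩ := Ideal.exists_pow_inf_eq_pow_smul I (M := A) J
    have hle : I ^ (n + c) • ⊤ ⊓ J ≤ (I ^ n • ⊤ : Submodule A J).map J.subtype := by
      rw [hc _ le_add_self, Nat.add_sub_cancel, Submodule.map_smul'', Submodule.map_top,
        Submodule.range_subtype]
      exact Submodule.smul_mono le_rfl inf_le_right
    obtain ⟨v, rfl⟩ := exists_lTensor_inclusion_eq hM J hx (n + c)
    rw [← Ideal.map_pow]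
    let w : (I ^ (n + c) • ⊤ ⊓ J : Submodule A A) →ₗ[A] (I ^ n • ⊤ : Submodule A J) :=
      (Submodule.inclusion inf_le_right).codRestrict _ fun v ↦ by
        obtain ⟨u, hu, hv⟩ := hle v.2
        obtain rfl : u = Submodule.inclusion inf_le_right v := Subtype.ext hv
        exact hu
    have hw : Submodule.inclusion inf_le_right = (I ^ n • ⊤ : Submodule A J).subtype ∘ₗ w := rfl
    rw [hw, LinearMap.lTensor_comp_apply]
    exact lTensor_smul_top_subtype_mem (I ^ n) _
  have := Ideal.iInf_pow_smul_eq_bot_of_le_jacobson (M := M ⊗[A] J) _ hI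
  rw [← Submodule.mem_bot B, ← this]
  exact Submodule.mem_iInf _ |>.2 hmem

end LocalCriterion

theorem isOpen_of_stableUnderGeneralization_of_inter_closure {X : Type*} [TopologicalSpace X]
    [TopologicalSpace.NoetherianSpace X] [QuasiSober X] {U : Set X}
    (hgen : StableUnderGeneralization U)
    (hU : ∀ x ∈ U, ∃ V, IsOpen V ∧ x ∈ V ∧ V ∩ closure {x} ⊆ U) : IsOpen U := by
  suffices h : ∀ C : TopologicalSpace.Closeds X, IsClosed ((C : Set X) \ U) by
    have := h ⊤
    rwa [TopologicalSpace.Closeds.coe_top, ← Set.compl_eq_univ_sdiff, isClosed_compl_iff] at this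
  intro C
  induction C using WellFoundedLT.induction with | ind C ih =>
  obtain ⟨S, hS, hclosed, hirr, hC⟩ :=
    TopologicalSpace.NoetherianSpace.exists_finite_set_isClosed_irreducible C.isClosed
  simp only [hC, Set.sUnion_eq_biUnion, Set.iUnion_sdiff]
  refine hS.isClosed_biUnion fun Z hZS ↦ ?_
  obtain ⟨x, hx⟩ := QuasiSober.sober (hirr Z hZS) (hclosed Z hZS)
  by_cases hxU : x ∈ U
  · obtain ⟨V, hV, hxV, hVU⟩ := hU x hxU
    rw [hx.def] at hVU
    have hZC : Z ⊆ C := hC ▸ Set.subset_sUnion_of_mem hZS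
    let Z' : TopologicalSpace.Closeds X := ⟨Z \ V, (hclosed Z hZS).sdiff hV⟩
    have hlt : Z' < C := lt_of_le_of_ne (Set.sdiff_subset.trans hZC) fun h ↦
      (h.ge (hZC hx.mem)).2 hxV
    have hZ' : Z \ U = (Z' : Set X) \ U := by
      ext z
      have := @hVU z
      change _ ↔ (z ∈ Z ∧ z ∉ V) ∧ z ∉ U
      simp only [Set.mem_inter_iff, Set.mem_sdiff] at this ⊢
      tauto
    exact hZ' ▸ ih Z' hlt
  · rw [Disjoint.sdiff_eq_left]
    · exact hclosed Z hZS
    · exact Set.disjoint_left.2 fun z hzZ hzU ↦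
        hxU (hgen (hx.specializes hzZ) hzU)

section Localization
variable {A R M L : Type*} [CommRing A] [CommRing R] [Algebra A R] [AddCommGroup M] [Module A M]
  [Module R M] [IsScalarTower A R M] [AddCommGroup L] [Module A L] [Module R L]
  [IsScalarTower A R L] (S : Submonoid R)

theorem lTensor_injective_iff_of_isLocalizedModule (g : M →ₗ[R] L) [IsLocalizedModule S g]
    {X Y : Type*} [AddCommGroup X] [Module A X] [AddCommGroup Y] [Module A Y] (f : X →ₗ[A] Y) :
    Function.Injective (f.lTensor L) ↔
      ∀ x : M ⊗[A] X, f.lTensor M x = 0 → ∃ s ∈ S, s • x = 0 := by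
  let gX : M ⊗[A] X →ₗ[R] L ⊗[A] X := AlgebraTensorModule.rTensor A X g
  let gY : M ⊗[A] Y →ₗ[R] L ⊗[A] Y := AlgebraTensorModule.rTensor A Y g
  let fM : M ⊗[A] X →ₗ[R] M ⊗[A] Y := AlgebraTensorModule.lTensor R M f
  let fL : L ⊗[A] X →ₗ[R] L ⊗[A] Y := AlgebraTensorModule.lTensor R L f
  have comm (x) : fL (gX x) = gY (fM x) :=
    LinearMap.congr_fun (f := fL ∘ₗ gX) (g := gY ∘ₗ fM) (by ext; rfl) x
  change Function.Injective fL ↔ ∀ x, fM x = 0 → _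
  constructor
  · intro hf x hx
    have hgx : gX x = 0 := hf <| by rw [comm, hx, map_zero, map_zero]
    obtain ⟨s, hs⟩ := (IsLocalizedModule.eq_zero_iff S gX).1 hgx
    exact ⟨s, s.2, hs⟩
  · intro h
    rw [injective_iff_map_eq_zero]
    intro l hl
    obtain ⟨⟨x, s⟩, hx : s • l = gX x⟩ := IsLocalizedModule.surj S gX l
    have hgx : gY (fM x) = 0 := by
      rw [← comm, ← hx, Submonoid.smul_def, map_smul, hl, smul_zero]
    obtain ⟨t, ht : t.1 • fM x = 0⟩ := (IsLocalizedModule.eq_zero_iff S gY).1 hgx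
    obtain ⟨u, hu, hux⟩ := h (t.1 • x) (by rw [map_smul, ht])
    have hgx0 : gX x = 0 := by
      rw [IsLocalizedModule.eq_zero_iff S gX]
      refine ⟨⟨u, hu⟩ * t, ?_⟩
      rw [Submonoid.smul_def, Submonoid.coe_mul, mul_smul, hux]
    exact IsLocalizedModule.smul_injective gX s ((hx.trans hgx0).trans (smul_zero s).symm)

theorem flat_iff_of_isLocalizedModule (g : M →ₗ[R] L) [IsLocalizedModule S g] :
    Module.Flat A L ↔
      ∀ (a : Ideal A) (x : M ⊗[A] a), a.subtype.lTensor M x = 0 → ∃ s ∈ S, s • x = 0 := by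
  simp only [Module.Flat.iff_lTensor_injective',
    lTensor_injective_iff_of_isLocalizedModule S g]

theorem exists_isTrivialRelation_smul (g : M →ₗ[R] L) [IsLocalizedModule S g]
    [Module.Flat A L] {ι : Type*} [Fintype ι] {f : ι → A} {x : ι → M} (hfx : ∑ i, f i • x i = 0) :
    ∃ s ∈ S, Module.IsTrivialRelation f (fun i ↦ s • x i) := by
  have hf (i : ι) : f i ∈ Ideal.span (Set.range f) := Ideal.subset_span ⟨i, rfl⟩
  obtain ⟨s, hs, hsx⟩ := (flat_iff_of_isLocalizedModule S g).1 inferInstance _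
    (∑ i, x i ⊗ₜ[A] (⟨f i, hf i⟩ : Ideal.span (Set.range f))) <| by
      refine (TensorProduct.rid A M).injective ?_
      simpa using hfx
  refine ⟨s, hs, Module.isTrivialRelation_iff_vanishesTrivially.2 ?_⟩
  have hspan : Submodule.span A (Set.range fun i ↦ (⟨f i, hf i⟩ : Ideal.span (Set.range f))) = ⊤ :=
    Submodule.span_range_subtype_eq_top_iff _ hf |>.2 rfl
  obtain ⟨k, a, y, hy, ha⟩ := vanishesTrivially_of_sum_tmul_eq_zero A hspan
    (n := fun i ↦ s • x i) <| (TensorProduct.comm A _ M).injective <| by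
      simpa [Finset.smul_sum, smul_tmul'] using hsx
  exact ⟨k, a, y, hy, fun j ↦ by simpa using congrArg Subtype.val (ha j)⟩

end Localization

/-- The points of `Spec R` at which `R` is flat over `A`. -/
def flatLocus (A R : Type*) [CommRing A] [CommRing R] [Algebra A R] : Set (PrimeSpectrum R) :=
  {q | Module.Flat A (Localization.AtPrime q.asIdeal)}

section FlatLocus
variable {A R : Type*} [CommRing A] [CommRing R] [Algebra A R]

variable (A) in
theorem isPushout_localization (A' R' : Type*) [CommRing A'] [CommRing R'] [Algebra A A']
    [Algebra A' R'] [Algebra R R'] [Algebra A R'] [IsScalarTower A A' R'] [IsScalarTower A R R']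
    [Algebra.IsPushout A A' R R'] (S : Submonoid R)
    [IsScalarTower A (Localization S) (Localization (Algebra.algebraMapSubmonoid R' S))] :
    Algebra.IsPushout A A' (Localization S) (Localization (Algebra.algebraMapSubmonoid R' S)) := by
  let C := Localization (Algebra.algebraMapSubmonoid R' S)
  have : IsScalarTower A R C := .to₁₂₄ A R R' C
  have hleft : Algebra.IsPushout A R A' R' := .symm inferInstance
  have hright : Algebra.IsPushout R (Localization S) R' C :=
    .symm (Algebra.isPushout_of_isLocalization S ..)
  exact ((Algebra.IsPushout.comp_iff A R A' R').2 hright).symm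

theorem flat_localization_of_isPushout {A' R' : Type*} [CommRing A'] [CommRing R'] [Algebra A A']
    [Algebra A' R'] [Algebra R R'] [Algebra A R'] [IsScalarTower A A' R'] [IsScalarTower A R R']
    [Algebra.IsPushout A A' R R'] {S : Submonoid R} {S' : Submonoid R'}
    (h : Algebra.algebraMapSubmonoid R' S ≤ S') [Module.Flat A (Localization S)] :
    Module.Flat A' (Localization S') := by
  let C := Localization (Algebra.algebraMapSubmonoid R' S)
  have : IsScalarTower A (Localization S) C := .to₁₃₄ A R _ C
  have := isPushout_localization A A' R' S
  have hC : Module.Flat A' C := .isBaseChange A A' (Localization S) C Algebra.IsPushout.out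
  let := IsLocalization.localizationAlgebraOfSubmonoidLe C (Localization S') _ _ h
  have := IsLocalization.localization_isScalarTower_of_submonoid_le C (Localization S') _ _ h
  have : IsScalarTower A' C (Localization S') := .to₁₃₄ A' R' _ _
  have := IsLocalization.isLocalization_of_submonoid_le C (Localization S') _ _ h
  have := IsLocalization.flat (Localization S') (S'.map (algebraMap R' C))
  exact .trans A' C _

theorem stableUnderGeneralization_flatLocus : StableUnderGeneralization (flatLocus A R) := by
  intro q p hpq hq
  have : Module.Flat A (Localization.AtPrime q.asIdeal) := hq
  refine flat_localization_of_isPushout (A := A) (R := R) (S := q.asIdeal.primeCompl) ?_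
  rw [Algebra.algebraMapSubmonoid_self]
  exact fun s hs hsp ↦ hs ((PrimeSpectrum.le_iff_specializes p q).2 hpq hsp)

theorem preimage_flatLocus_subset (A' R' : Type*) [CommRing A'] [CommRing R'] [Algebra A A']
    [Algebra A' R'] [Algebra R R'] [Algebra A R'] [IsScalarTower A A' R'] [IsScalarTower A R R']
    [Algebra.IsPushout A A' R R'] :
    PrimeSpectrum.comap (algebraMap R R') ⁻¹' flatLocus A R ⊆ flatLocus A' R' := by
  intro q hq
  have : Module.Flat A (Localization.AtPrime (q.asIdeal.comap (algebraMap R R'))) := hq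
  exact flat_localization_of_isPushout (A := A) (R := R)
    (S := (q.asIdeal.comap (algebraMap R R')).primeCompl) (by rintro _ ⟨s, hs, rfl⟩; exact hs)

theorem mem_flatLocus_iff {q : PrimeSpectrum R} (L : Type*) [CommRing L] [Algebra R L]
    [IsLocalization.AtPrime L q.asIdeal] [Algebra A L] [IsScalarTower A R L] :
    q ∈ flatLocus A R ↔ Module.Flat A L := by
  let e := (IsLocalization.algEquiv q.asIdeal.primeCompl (Localization.AtPrime q.asIdeal)
    L).toLinearEquiv.restrictScalars A
  exact ⟨fun (_ : Module.Flat A (Localization.AtPrime q.asIdeal)) ↦ .of_linearEquiv e.symm,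
    fun _ ↦ .of_linearEquiv (M := L) e⟩

theorem preimage_flatLocus_eq (S : Submonoid R) (C : Type*) [CommRing C] [Algebra R C]
    [IsLocalization S C] [Algebra A C] [IsScalarTower A R C] :
    PrimeSpectrum.comap (algebraMap R C) ⁻¹' flatLocus A R = flatLocus A C := by
  ext q
  let L := Localization.AtPrime q.asIdeal
  have : IsScalarTower A R L := .to₁₂₄ A R C L
  have : IsLocalization.AtPrime L (q.comap (algebraMap R C)).asIdeal :=
    IsLocalization.isLocalization_isLocalization_atPrime_isLocalization S L q.asIdeal
  exact mem_flatLocus_iff L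

theorem isOpen_flatLocus_of_algEquiv {R' : Type*} [CommRing R'] [Algebra A R'] (e : R ≃ₐ[A] R')
    (h : IsOpen (flatLocus A R)) : IsOpen (flatLocus A R') := by
  let : Algebra R R' := e.toAlgHom.toAlgebra
  have : IsScalarTower A R R' := .of_algHom e.toAlgHom
  have : IsLocalization.Away (1 : R) R' :=
    IsLocalization.away_of_isUnit_of_bijective R' isUnit_one e.bijective
  rw [← preimage_flatLocus_eq (Submonoid.powers (1 : R))]
  exact h.preimage (PrimeSpectrum.continuous_comap _)

theorem flat_of_flatLocus_eq_univ (h : flatLocus A R = Set.univ) : Module.Flat A R :=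
  Module.flat_of_isLocalized_maximal R _ (fun m _ ↦ Localization.AtPrime m)
    (fun m _ ↦ Algebra.linearMap _ (Localization.AtPrime m)) fun m hm ↦
      (h ▸ Set.mem_univ (⟨m, hm.isPrime⟩ : PrimeSpectrum R) : _ ∈ flatLocus A R)

theorem flat_localizationAway {f : R} (hf : ↑(PrimeSpectrum.basicOpen f) ⊆ flatLocus A R) :
    Module.Flat A (Localization.Away f) := by
  refine flat_of_flatLocus_eq_univ (Set.eq_univ_of_forall fun q ↦ ?_)
  rw [← preimage_flatLocus_eq (R := R) (Submonoid.powers f)]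
  rw [← PrimeSpectrum.localization_away_comap_range (Localization.Away f)] at hf
  exact hf ⟨q, rfl⟩

theorem flatLocus_mem_nhds_of_isLocalizationAway {g : R} (C : Type*) [CommRing C] [Algebra R C]
    [IsLocalization.Away g C] [Algebra A C] [IsScalarTower A R C] {q : PrimeSpectrum C} :
    flatLocus A R ∈ nhds (q.comap (algebraMap R C)) ↔ flatLocus A C ∈ nhds q := by
  rw [← (PrimeSpectrum.localization_away_isOpenEmbedding C g).map_nhds_eq, Filter.mem_map,
    preimage_flatLocus_eq (Submonoid.powers g)]

end FlatLocus

section GenericFlatness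
variable {A M : Type*} [CommRing A] [AddCommGroup M] [Module A M]

theorem flat_localizedModule_away_of_dvd {g g' : A} (h : g ∣ g')
    [Module.Flat A (LocalizedModule.Away g M)] : Module.Flat A (LocalizedModule.Away g' M) := by
  rw [flat_iff_of_isLocalizedModule (.powers g') (LocalizedModule.mkLinearMap _ M)]
  intro a x hx
  obtain ⟨_, ⟨n, rfl⟩, hsx : g ^ n • x = 0⟩ := (flat_iff_of_isLocalizedModule (.powers g)
    (LocalizedModule.mkLinearMap (.powers g) M)).1 inferInstance a x hx
  obtain ⟨c, hc⟩ := pow_dvd_pow_of_dvd h n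
  exact ⟨g' ^ n, ⟨n, rfl⟩, by rw [hc, mul_comm, mul_smul, hsx, smul_zero]⟩

theorem flat_of_exact {M' M'' : Type*} [AddCommGroup M'] [Module A M'] [AddCommGroup M'']
    [Module A M''] {i : M' →ₗ[A] M} {p : M →ₗ[A] M''} (hi : Function.Injective i)
    (hip : Function.Exact i p) (hp : Function.Surjective p) [Module.Flat A M']
    [Module.Flat A M''] : Module.Flat A M := by
  rw [Module.Flat.iff_lTensor_injective']
  intro a
  rw [injective_iff_map_eq_zero]
  intro x hx
  have hpx : p.rTensor a x = 0 := by
    refine Module.Flat.lTensor_preserves_injective_linearMap (M := M'') a.subtype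
      a.injective_subtype ?_
    rw [map_zero, ← LinearMap.comp_apply, LinearMap.lTensor_comp_rTensor,
      ← LinearMap.rTensor_comp_lTensor, LinearMap.comp_apply, hx, map_zero]
  obtain ⟨y, rfl⟩ := (rTensor_exact a hip hp x).1 hpx
  have hy : a.subtype.lTensor M' y = 0 := by
    refine Module.Flat.rTensor_preserves_injective_linearMap (M := A) i hi ?_
    rw [map_zero, ← LinearMap.comp_apply, LinearMap.rTensor_comp_lTensor,
      ← LinearMap.lTensor_comp_rTensor, LinearMap.comp_apply, hx]
  rw [Module.Flat.lTensor_preserves_injective_linearMap (M := M') a.subtype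
      a.injective_subtype (hy.trans (map_zero _).symm), map_zero]

theorem flat_localizedModule_of_exact (S : Submonoid A) {M' M'' : Type*} [AddCommGroup M']
    [Module A M'] [AddCommGroup M''] [Module A M''] {i : M' →ₗ[A] M} {p : M →ₗ[A] M''}
    (hi : Function.Injective i) (hip : Function.Exact i p) (hp : Function.Surjective p)
    [Module.Flat A (LocalizedModule S M')] [Module.Flat A (LocalizedModule S M'')] :
    Module.Flat A (LocalizedModule S M) :=
  let f := LocalizedModule.mkLinearMap S M
  let f' := LocalizedModule.mkLinearMap S M'
  let f'' := LocalizedModule.mkLinearMap S M''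
  flat_of_exact (IsLocalizedModule.map_injective S f' f i hi)
    (IsLocalizedModule.map_exact S f' f f'' i p hip) (IsLocalizedModule.map_surjective S f f'' p hp)

theorem flat_localizedModule_of_iSup_eq_top (S : Submonoid A) {F : ℕ → Submodule A M}
    (hF : Monotone F) (htop : ⨆ i, F i = ⊤)
    (hflat : ∀ i, Module.Flat A (LocalizedModule S (F i))) :
    Module.Flat A (LocalizedModule S M) := by
  rw [flat_iff_of_isLocalizedModule S (LocalizedModule.mkLinearMap S M)]
  intro a x hx
  have hlift (x : M ⊗[A] a) :
      ∀ᶠ i in Filter.atTop, x ∈ LinearMap.range ((F i).subtype.rTensor a) := by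
    induction x using TensorProduct.induction_on with
    | zero => exact .of_forall fun i ↦ zero_mem _
    | add x y hx hy => filter_upwards [hx, hy] with i using add_mem
    | tmul m r =>
      obtain ⟨i, hi⟩ := (Submodule.mem_iSup_of_directed F hF.directed_le).1
        (htop.ge (Submodule.mem_top : m ∈ ⊤))
      filter_upwards [Filter.eventually_ge_atTop i] with j hj
      exact ⟨⟨m, hF hj hi⟩ ⊗ₜ r, rfl⟩
  obtain ⟨i, y, rfl⟩ := (hlift x).exists
  have hy : a.subtype.lTensor (F i) y = 0 := by
    refine Module.Flat.rTensor_preserves_injective_linearMap (M := A) (F i).subtype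
      (F i).injective_subtype ?_
    rw [map_zero, ← LinearMap.comp_apply, LinearMap.rTensor_comp_lTensor,
      ← LinearMap.lTensor_comp_rTensor, LinearMap.comp_apply, hx]
  obtain ⟨s, hs, hsy⟩ := (flat_iff_of_isLocalizedModule S
    (LocalizedModule.mkLinearMap S (F i))).1 (hflat i) a y hy
  exact ⟨s, hs, by rw [← map_smul, hsy, map_zero]⟩

theorem flat_localizedModule_of_filtration (S : Submonoid A) {F : ℕ → Submodule A M}
    (hF : Monotone F) (hbot : F 0 = ⊥) (htop : ⨆ i, F i = ⊤)
    (hflat : ∀ i, Module.Flat A (LocalizedModule S ((F (i + 1)).map (F i).mkQ))) :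
    Module.Flat A (LocalizedModule S M) := by
  refine flat_localizedModule_of_iSup_eq_top S hF htop fun i ↦ ?_
  induction i with
  | zero =>
    have : Subsingleton (F 0) := by rw [hbot]; infer_instance
    have : Subsingleton (LocalizedModule S (F 0)) :=
      (IsLocalizedModule.subsingleton_iff S (LocalizedModule.mkLinearMap S (F 0))).2
        fun m ↦ ⟨1, S.one_mem, Subsingleton.elim _ _⟩
    infer_instance
  | succ i ih =>
    have := hflat i
    exact flat_localizedModule_of_exact S (Submodule.inclusion_injective _)
      (exact_inclusion_submoduleMap_mkQ (hF i.le_succ)) ((F i).mkQ.submoduleMap_surjective _)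

/-- `M` becomes flat over `A` after inverting a nonzero element of `A`. This is the conclusion of
Grothendieck's generic freeness lemma, weakened from freeness to flatness. -/
def GenericallyFlat (A M : Type*) [CommRing A] [AddCommGroup M] [Module A M] : Prop :=
  ∃ g : A, g ≠ 0 ∧ Module.Flat A (LocalizedModule.Away g M)

theorem genericallyFlat_of_finite [IsDomain A] [IsNoetherianRing A] [Module.Finite A M] :
    GenericallyFlat A M := by
  have := Module.finitePresentation_of_finite A M
  obtain ⟨g, hg, _, _⟩ := Module.FinitePresentation.exists_free_localizedModule_powers
    (nonZeroDivisors A) (LocalizedModule.mkLinearMap (nonZeroDivisors A) M) (FractionRing A)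
  have := IsLocalization.flat (Localization.Away g) (Submonoid.powers g)
  exact ⟨g, nonZeroDivisors.ne_zero hg, .trans A (Localization.Away g) _⟩

section
variable {B : Type*} [CommRing B] [Algebra A B] [Module B M] [IsScalarTower A B M]

theorem exists_flat_localizedModule_quotient [IsDomain A] [IsNoetherian B M]
    (hM : ∀ K : Submodule B M, GenericallyFlat A (M ⧸ K)) (K : ℕ →o Submodule B M) :
    ∃ g : A, g ≠ 0 ∧ ∀ i, Module.Flat A (LocalizedModule.Away g (M ⧸ K i)) := by
  choose g hg0 hg using fun i ↦ hM (K i)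
  obtain ⟨m, hm⟩ := monotone_stabilizes_iff_noetherian.2 ‹IsNoetherian B M› K
  have hm' (i) : K i = K (min i m) := by
    obtain hi | hi := le_total i m
    · rw [min_eq_left hi]
    · rw [min_eq_right hi, hm i hi]
  refine ⟨∏ i ∈ Finset.range (m + 1), g i, Finset.prod_ne_zero_iff.2 fun i _ ↦ hg0 i, ?_⟩
  intro i
  rw [hm' i]
  have := hg (min i m)
  exact flat_localizedModule_away_of_dvd (Finset.dvd_prod_of_mem g
    (Finset.mem_range_succ_iff.2 (min_le_right i m)))

theorem genericallyFlat_of_iSup_map_pow_eq_top [IsDomain A] {N : Submodule B M} [IsNoetherian B N]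
    (hN : ∀ K : Submodule B N, GenericallyFlat A (N ⧸ K)) (φ : Module.End B M)
    (htop : ⨆ i, N.map (φ ^ i) = ⊤) : GenericallyFlat A M := by
  let F (i : ℕ) : Submodule B M := ⨆ j < i, N.map (φ ^ j)
  have hF_succ (i) : F (i + 1) = F i ⊔ N.map (φ ^ i) := by
    simp only [F, Nat.lt_succ_iff_lt_or_eq, iSup_or, iSup_sup_eq, iSup_iSup_eq_left]
  have hF_map (i) : (F i).map φ ≤ F (i + 1) := by
    simp only [F, Submodule.map_iSup, ← Submodule.map_comp]
    refine iSup₂_le fun j hj ↦ le_iSup₂_of_le (j + 1) (by lia) ?_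
    rw [pow_succ']
    rfl
  let ψ (i : ℕ) : N →ₗ[B] M ⧸ F i := (F i).mkQ ∘ₗ (φ ^ i) ∘ₗ N.subtype
  have hψ_ker : Monotone fun i ↦ LinearMap.ker (ψ i) := monotone_nat_of_le_succ fun i n hn ↦ by
    simp only [ψ, LinearMap.mem_ker, LinearMap.comp_apply, Submodule.mkQ_apply,
      Submodule.Quotient.mk_eq_zero] at hn ⊢
    rw [pow_succ']
    exact hF_map i ⟨_, hn, rfl⟩
  have hψ_range (i) : LinearMap.range (ψ i) = (F (i + 1)).map (F i).mkQ := by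
    rw [hF_succ, Submodule.map_sup, Submodule.mkQ_map_self, bot_sup_eq, LinearMap.range_comp,
      LinearMap.range_comp, Submodule.range_subtype]
  have hle : ⨆ i, N.map (φ ^ i) ≤ ⨆ i, F i := iSup_le fun i ↦ le_iSup_of_le (i + 1) <| by
    rw [hF_succ]
    exact le_sup_right
  obtain ⟨g, hg0, hg⟩ := exists_flat_localizedModule_quotient hN ⟨_, hψ_ker⟩
  refine ⟨g, hg0, flat_localizedModule_of_filtration
    (F := fun i ↦ (F i).restrictScalars A) _ ?_ ?_ ?_ fun i ↦ ?_⟩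
  · refine monotone_nat_of_le_succ fun i ↦ ?_
    rw [hF_succ]
    exact le_sup_left (a := F i)
  · simp [F]
  · rw [← Submodule.restrictScalars_iSup, eq_top_iff.2 (htop.ge.trans hle),
      Submodule.restrictScalars_top]
  · have := hg i
    let Q := ((F (i + 1)).restrictScalars A).map ((F i).restrictScalars A).mkQ
    let e : (N ⧸ LinearMap.ker (ψ i)) ≃ₗ[A] Q :=
      ((ψ i).quotKerEquivRange ≪≫ₗ LinearEquiv.ofEq _ _ (hψ_range i)).restrictScalars A
    let f := LocalizedModule.mkLinearMap (.powers g) (N ⧸ LinearMap.ker (ψ i))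
    let f' := LocalizedModule.mkLinearMap (.powers g) Q
    exact .of_linearEquiv (IsLocalizedModule.linearEquiv (.powers g) f (f' ∘ₗ e.toLinearMap)).symm

end

/-- Generic flatness holds for all finite `B`-modules, viewed as `A`-modules. -/
def HasGenericFlatness (A B : Type*) [CommRing A] [CommRing B] [Algebra A B] : Prop :=
  ∀ (M : Type u) [AddCommGroup M] [Module A M] [Module B M] [IsScalarTower A B M]
    [Module.Finite B M], GenericallyFlat A M

theorem hasGenericFlatness_of_finite {B : Type*} [CommRing B] [Algebra A B] [IsDomain A]
    [IsNoetherianRing A] [Module.Finite A B] : HasGenericFlatness.{u} A B := by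
  intro M _ _ _ _ _
  have := Module.Finite.trans (R := A) B M
  exact genericallyFlat_of_finite

theorem HasGenericFlatness.of_adjoin_singleton {B C : Type*} [CommRing B] [Algebra A B]
    [CommRing C] [Algebra A C] [Algebra B C] [IsScalarTower A B C] [IsDomain A]
    [IsNoetherianRing B] (hB : HasGenericFlatness.{u} A B) {x : C}
    (hx : Algebra.adjoin B {x} = ⊤) : HasGenericFlatness.{u} A C := by
  intro M _ _ _ _ _
  let : Module B M := .compHom M (algebraMap B C)
  have : IsScalarTower B C M := .of_compHom B C M
  have : IsScalarTower A B M := .to₁₂₄ A B C M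
  obtain ⟨s, hs⟩ := Module.Finite.fg_top (R := C) (M := M)
  let φ : Module.End B M := Algebra.lsmul B B M x
  let N : Submodule B M := .span B s
  have : Module.Finite B N := .of_fg ⟨s, rfl⟩
  refine genericallyFlat_of_iSup_map_pow_eq_top (N := N) (fun K ↦ hB _) φ ?_
  set F := ⨆ i, N.map (φ ^ i)
  have hφ (m) (hm : m ∈ F) : φ m ∈ F := by
    have : F.map φ ≤ F := by
      simp only [F, Submodule.map_iSup, ← Submodule.map_comp]
      refine iSup_le fun i ↦ le_iSup_of_le (i + 1) ?_
      rw [pow_succ']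
      rfl
    exact this ⟨m, hm, rfl⟩
  have hsmul (c : C) : ∀ m ∈ F, c • m ∈ F := by
    induction hx.ge (Algebra.mem_top : c ∈ ⊤) using Algebra.adjoin_induction with
    | mem c hc => rwa [Set.mem_singleton_iff.1 hc]
    | algebraMap b => exact fun m ↦ F.smul_mem b
    | add c d _ _ hc hd => exact fun m hm ↦ add_smul c d m ▸ add_mem (hc m hm) (hd m hm)
    | mul c d _ _ hc hd => exact fun m hm ↦ mul_smul c d m ▸ hc _ (hd m hm)
  let F' : Submodule C M := { F with smul_mem' := fun c m ↦ hsmul c m }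
  have hF' : ⊤ ≤ F' := hs.ge.trans <| Submodule.span_le.2 fun m hm ↦
    le_iSup (fun i ↦ N.map (φ ^ i)) 0 ⟨m, Submodule.subset_span hm, rfl⟩
  exact eq_top_iff.2 fun m _ ↦ hF' (Submodule.mem_top : m ∈ ⊤)

theorem hasGenericFlatness_adjoin {B : Type*} [CommRing B] [Algebra A B] [IsDomain A]
    [IsNoetherianRing A] (s : Finset B) :
    HasGenericFlatness.{u} A (Algebra.adjoin A (s : Set B)) := by
  classical
  induction s using Finset.induction_on with
  | empty =>
    rw [Finset.coe_empty, Algebra.adjoin_empty]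
    exact hasGenericFlatness_of_finite
  | insert x s _ ih =>
    rw [Finset.coe_insert, Set.insert_eq, Set.union_comm, Algebra.adjoin_union_eq_adjoin_adjoin]
    have := Algebra.FiniteType.adjoin_of_finite (R := A) s.finite_toSet
    have := Algebra.FiniteType.isNoetherianRing A (Algebra.adjoin A (s : Set B))
    let C := Algebra.adjoin (Algebra.adjoin A (s : Set B)) {x}
    have hx : Algebra.adjoin (Algebra.adjoin A (s : Set B))
        {(⟨x, Algebra.self_mem_adjoin_singleton _ x⟩ : C)} = ⊤ := by
      convert! Algebra.adjoin_adjoin_coe_preimage (R := Algebra.adjoin A (s : Set B)) (s := {x})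
      exact Set.ext fun c ↦ Subtype.ext_iff
    have hC : HasGenericFlatness.{u} A C := ih.of_adjoin_singleton hx
    exact hC

theorem genericallyFlat_of_finiteType {B : Type*} [CommRing B] [Algebra A B] [IsDomain A]
    [IsNoetherianRing A] [Algebra.FiniteType A B] : GenericallyFlat A B := by
  obtain ⟨s, hs⟩ := Algebra.FiniteType.out (R := A) (A := B)
  have : Module.Finite (Algebra.adjoin A (s : Set B)) B :=
    .of_surjective (Algebra.linearMap _ B) fun b ↦ ⟨⟨b, hs.ge Algebra.mem_top⟩, rfl⟩
  exact hasGenericFlatness_adjoin s B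

end GenericFlatness

theorem exists_smul_eq_zero_of_fg {R M : Type*} [CommRing R] [AddCommGroup M] [Module R M]
    (S : Submonoid R) {N : Submodule R M} (hN : N.FG) (h : ∀ x ∈ N, ∃ s ∈ S, s • x = 0) :
    ∃ s ∈ S, ∀ x ∈ N, s • x = 0 := by
  have : Module.Finite R N := .of_fg hN
  have hzero (x : N) : LocalizedModule.mkLinearMap S N x = 0 := by
    obtain ⟨s, hs, hsx⟩ := h x x.2
    exact (IsLocalizedModule.eq_zero_iff S (LocalizedModule.mkLinearMap S N)).2
      ⟨⟨s, hs⟩, Subtype.ext hsx⟩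
  obtain ⟨s, hs⟩ := Module.Finite.exists_smul_of_comp_eq_of_isLocalizedModule (M := N) (N := N)
    S (LocalizedModule.mkLinearMap S N) LinearMap.id 0 (LinearMap.ext fun x ↦ by simp [hzero])
  exact ⟨s, s.2, fun x hx ↦ by
    simpa [Submonoid.smul_def] using congrArg Subtype.val (LinearMap.congr_fun hs ⟨x, hx⟩)⟩

section NoetherianOpenness
variable {A R : Type*} [CommRing A] [CommRing R] [Algebra A R]

theorem exists_smul_eq_zero_of_flat [IsNoetherianRing A] [IsNoetherianRing R] (S : Submonoid R)
    [Module.Flat A (Localization S)] (a : Ideal A) :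
    ∃ s ∈ S, ∀ x : R ⊗[A] a, a.subtype.lTensor R x = 0 → s • x = 0 :=
  exists_smul_eq_zero_of_fg S (N := LinearMap.ker (AlgebraTensorModule.lTensor R R a.subtype))
    (IsNoetherian.noetherian _)
    ((flat_iff_of_isLocalizedModule S (Algebra.linearMap R (Localization S))).1 inferInstance a)

theorem flat_baseChange_localization {A' R' : Type*} [CommRing A'] [CommRing R'] [Algebra A A']
    [Algebra A' R'] [Algebra R R'] [Algebra A R'] [IsScalarTower A A' R'] [IsScalarTower A R R']
    [Algebra.IsPushout A A' R R'] (S : Submonoid R) {g : A'}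
    (hg : algebraMap A' R' g ∈ Algebra.algebraMapSubmonoid R' S)
    [Module.Flat A' (LocalizedModule.Away g R')] :
    Module.Flat A' (A' ⊗[A] Localization S) := by
  let C := Localization (Algebra.algebraMapSubmonoid R' S)
  have : IsScalarTower A (Localization S) C := .to₁₃₄ A R _ C
  have := isPushout_localization A A' R' S
  have : Module.Flat A' C := by
    rw [flat_iff_of_isLocalizedModule (Algebra.algebraMapSubmonoid R' S) (Algebra.linearMap R' C)]
    intro a x hx
    obtain ⟨_, ⟨n, rfl⟩, hgx⟩ := (flat_iff_of_isLocalizedModule (.powers g)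
      (LocalizedModule.mkLinearMap (.powers g) R')).1 inferInstance a x hx
    refine ⟨_, pow_mem hg n, ?_⟩
    rw [← map_pow, algebraMap_smul]
    exact hgx
  exact .of_linearEquiv (Algebra.IsPushout.equiv A A' (Localization S) C).toLinearEquiv

theorem exists_flat_quotient_tensor_localization [IsNoetherianRing A] [Algebra.FiniteType A R]
    (P : Ideal A) [P.IsPrime] : ∃ g ∉ P, ∀ S : Submonoid R, algebraMap A R g ∈ S →
      Module.Flat (A ⧸ P) ((A ⧸ P) ⊗[A] Localization S) := by
  let := Algebra.TensorProduct.rightAlgebra (R := A) (A := A ⧸ P) (B := R)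
  obtain ⟨g, hg, hflat⟩ := genericallyFlat_of_finiteType (A := A ⧸ P) (B := (A ⧸ P) ⊗[A] R)
  obtain ⟨g, rfl⟩ := Ideal.Quotient.mk_surjective g
  refine ⟨g, fun hgP ↦ hg (Ideal.Quotient.eq_zero_iff_mem.2 hgP), fun S hgS ↦ ?_⟩
  refine flat_baseChange_localization (R' := (A ⧸ P) ⊗[A] R) S
    (g := Ideal.Quotient.mk P g) ⟨_, hgS, ?_⟩
  exact (Algebra.TensorProduct.tmul_one_eq_one_tmul g).symm

theorem isOpen_flatLocus_of_isNoetherianRing [IsNoetherianRing A] [Algebra.FiniteType A R] :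
    IsOpen (flatLocus A R) := by
  have := Algebra.FiniteType.isNoetherianRing A R
  refine isOpen_of_stableUnderGeneralization_of_inter_closure
    stableUnderGeneralization_flatLocus fun q hq ↦ ?_
  let P := q.asIdeal.under A
  have : Module.Flat A (Localization.AtPrime q.asIdeal) := hq
  obtain ⟨s, hs, hsP⟩ := exists_smul_eq_zero_of_flat q.asIdeal.primeCompl P
  obtain ⟨g, hg, hgP⟩ := exists_flat_quotient_tensor_localization (R := R) P
  refine ⟨PrimeSpectrum.basicOpen (s * algebraMap A R g), PrimeSpectrum.isOpen_basicOpen, ?_, ?_⟩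
  · exact q.asIdeal.primeCompl.mul_mem hs hg
  rintro q' ⟨hq', hqq'⟩
  have hle : q.asIdeal ≤ q'.asIdeal := by
    rwa [← specializes_iff_mem_closure, ← PrimeSpectrum.le_iff_specializes] at hqq'
  have hsg : s * algebraMap A R g ∉ q'.asIdeal := hq'
  have hsq' : s ∉ q'.asIdeal := fun h ↦ hsg (Ideal.mul_mem_right _ _ h)
  have := hgP q'.asIdeal.primeCompl fun h ↦ hsg (Ideal.mul_mem_left _ _ h)
  refine flat_of_flat_quotient_of_lTensor_injective P (B := Localization.AtPrime q'.asIdeal) _ ?_ ?_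
  · rw [IsLocalRing.jacobson_eq_maximalIdeal _ bot_ne_top,
      ← Localization.AtPrime.map_eq_maximalIdeal, IsScalarTower.algebraMap_eq A R, ← Ideal.map_map]
    exact Ideal.map_mono (Ideal.map_le_iff_le_comap.2 fun p hp ↦ hle hp)
  · rw [lTensor_injective_iff_of_isLocalizedModule q'.asIdeal.primeCompl
      (Algebra.linearMap R (Localization.AtPrime q'.asIdeal))]
    exact fun x hx ↦ ⟨s, hsq', hsP x hx⟩

end NoetherianOpenness

section Descent
variable {A₀ A R₀ : Type*} [CommRing A₀] [CommRing A] [Algebra A₀ A] [CommRing R₀] [Algebra A₀ R₀]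

theorem eventually_le_adjoin {B : Subalgebra A₀ A} (hB : B.FG) :
    ∀ᶠ s : Finset A in Filter.atTop, B ≤ Algebra.adjoin A₀ (s : Set A) := by
  obtain ⟨s₀, rfl⟩ := hB
  filter_upwards [Filter.eventually_ge_atTop s₀] with s hs using Algebra.adjoin_mono hs

theorem eventually_exists_map_val_eq (t : A ⊗[A₀] R₀) : ∀ᶠ s : Finset A in Filter.atTop,
    ∃ u, Algebra.TensorProduct.map (Algebra.adjoin A₀ (s : Set A)).val (.id A₀ R₀) u = t := by
  obtain ⟨B, hB, u, rfl⟩ := TensorProduct.Algebra.exists_of_fg t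
  filter_upwards [eventually_le_adjoin hB] with s hs
  refine ⟨Algebra.TensorProduct.map (Subalgebra.inclusion hs) (.id A₀ R₀) u, ?_⟩
  rw [← AlgHom.comp_apply, ← Algebra.TensorProduct.map_comp]
  rfl

theorem eventually_map_inclusion_eq {B : Subalgebra A₀ A} (hB : B.FG) {t t' : B ⊗[A₀] R₀}
    (h : Algebra.TensorProduct.map B.val (.id A₀ R₀) t =
      Algebra.TensorProduct.map B.val (.id A₀ R₀) t') :
    ∀ᶠ s : Finset A in Filter.atTop, ∀ hs : B ≤ Algebra.adjoin A₀ (s : Set A),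
      Algebra.TensorProduct.map (Subalgebra.inclusion hs) (.id A₀ R₀) t =
        Algebra.TensorProduct.map (Subalgebra.inclusion hs) (.id A₀ R₀) t' := by
  obtain ⟨B', hBB', hB', ht : Algebra.TensorProduct.map (Subalgebra.inclusion hBB') (.id A₀ R₀) t =
    Algebra.TensorProduct.map (Subalgebra.inclusion hBB') (.id A₀ R₀) t'⟩ :=
    TensorProduct.Algebra.eq_of_fg_of_subtype_eq hB h
  filter_upwards [eventually_le_adjoin hB'] with s hs hBs
  have hcomp : Algebra.TensorProduct.map (Subalgebra.inclusion hBs) (.id A₀ R₀) =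
      (Algebra.TensorProduct.map (Subalgebra.inclusion hs) (.id A₀ R₀)).comp
        (Algebra.TensorProduct.map (Subalgebra.inclusion hBB') (.id A₀ R₀)) := by
    rw [← Algebra.TensorProduct.map_comp]
    rfl
  rw [hcomp, AlgHom.comp_apply, ht, AlgHom.comp_apply]

theorem map_id_sum_smul {B B' κ : Type*} [CommRing B] [Algebra A₀ B] [CommRing B'] [Algebra A₀ B']
    (f : B →ₐ[A₀] B') (s : Finset κ) (c : κ → B) (z : κ → B ⊗[A₀] R₀) :
    Algebra.TensorProduct.map f (.id A₀ R₀) (∑ j ∈ s, c j • z j) =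
      ∑ j ∈ s, f (c j) • Algebra.TensorProduct.map f (.id A₀ R₀) (z j) := by
  simp only [Algebra.smul_def, map_sum, map_mul, Algebra.TensorProduct.algebraMap_apply,
    Algebra.algebraMap_self_apply, Algebra.TensorProduct.map_tmul, map_one]

theorem eventually_isTrivialRelation {ι : Type*} [Fintype ι] {p : ι → A₀} {b : ι → R₀}
    {σ : A ⊗[A₀] R₀}
    (h : Module.IsTrivialRelation (fun i ↦ algebraMap A₀ A (p i)) fun i ↦ σ * 1 ⊗ₜ b i) :
    ∀ᶠ s : Finset A in Filter.atTop, ∃ τ : Algebra.adjoin A₀ (s : Set A) ⊗[A₀] R₀,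
      Algebra.TensorProduct.map (Algebra.adjoin A₀ (s : Set A)).val (.id A₀ R₀) τ = σ ∧
      Module.IsTrivialRelation (fun i ↦ algebraMap A₀ (Algebra.adjoin A₀ (s : Set A)) (p i))
        fun i ↦ τ * 1 ⊗ₜ b i := by
  obtain ⟨k, a, y, hy, ha⟩ := h
  obtain ⟨B, hB, ⟨τ, hτ⟩, hyB, haB⟩ : ∃ B : Subalgebra A₀ A, B.FG ∧
      (∃ τ, Algebra.TensorProduct.map B.val (.id A₀ R₀) τ = σ) ∧
      (∀ j, ∃ z, Algebra.TensorProduct.map B.val (.id A₀ R₀) z = y j) ∧ ∀ i j, a i j ∈ B := by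
    obtain ⟨s, hσ, hy, ha⟩ := ((eventually_exists_map_val_eq σ).and <|
      (Filter.eventually_all.2 fun j ↦ eventually_exists_map_val_eq (y j)).and <|
      Filter.eventually_all.2 fun i ↦ Filter.eventually_all.2 fun j ↦
        Filter.eventually_ge_atTop {a i j}).exists
    exact ⟨_, Subalgebra.fg_adjoin_finset s, hσ, hy,
      fun i j ↦ Algebra.subset_adjoin (Finset.singleton_subset_iff.1 (ha i j))⟩
  choose z hz using hyB
  let c (i j) : B := ⟨a i j, haB i j⟩
  have heq (i : ι) : Algebra.TensorProduct.map B.val (.id A₀ R₀) (τ * 1 ⊗ₜ b i) =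
      Algebra.TensorProduct.map B.val (.id A₀ R₀) (∑ j, c i j • z j) := by
    rw [map_id_sum_smul, map_mul, hτ, Algebra.TensorProduct.map_tmul, map_one, AlgHom.id_apply]
    simp only [hz]
    exact hy i
  filter_upwards [eventually_le_adjoin hB, Filter.eventually_all.2
    fun i ↦ eventually_map_inclusion_eq hB (heq i)] with s hs hrel
  let φ := Algebra.TensorProduct.map (Subalgebra.inclusion hs) (AlgHom.id A₀ R₀)
  refine ⟨φ τ, ?_, k, fun i j ↦ Subalgebra.inclusion hs (c i j), φ ∘ z, fun i ↦ ?_, fun j ↦ ?_⟩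
  · rw [← AlgHom.comp_apply, ← Algebra.TensorProduct.map_comp, Subalgebra.val_comp_inclusion]
    exact hτ
  · have := hrel i hs
    rwa [map_id_sum_smul, map_mul, Algebra.TensorProduct.map_tmul, map_one] at this
  · exact Subtype.ext <| by simpa [c] using ha j

end Descent

section FiniteLevel
variable {A₀ R₀ : Type*} [CommRing A₀] [CommRing R₀] [Algebra A₀ R₀]

/-- The comparison map `R₀ ⊗ P → R₁ ⊗ PA₁` for an ideal `P` of `A₀`, where `R₁` is an algebra over
both `R₀` and `A₁`. -/
noncomputable def lTensorIdealMap (P : Ideal A₀) (A₁ R₁ : Type*) [CommRing A₁]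
    [Algebra A₀ A₁] [CommRing R₁] [Algebra A₁ R₁] [Algebra R₀ R₁] [Algebra A₀ R₁]
    [IsScalarTower A₀ A₁ R₁] [IsScalarTower A₀ R₀ R₁] :
    R₀ ⊗[A₀] P →ₗ[R₀] R₁ ⊗[A₁] P.map (algebraMap A₀ A₁) :=
  LinearMap.liftBaseChange R₀ <|
    (TensorProduct.mk A₁ R₁ _ 1).restrictScalars A₀ ∘ₗ Algebra.idealMap A₁ P

variable {A₁ R₁ : Type*} [CommRing A₁] [Algebra A₀ A₁] [CommRing R₁]
    [Algebra A₁ R₁] [Algebra R₀ R₁] [Algebra A₀ R₁] [IsScalarTower A₀ A₁ R₁]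
    [IsScalarTower A₀ R₀ R₁]

theorem lTensorIdealMap_tmul {P : Ideal A₀} (b : R₀) (p : P) :
    lTensorIdealMap P A₁ R₁ (b ⊗ₜ p) = algebraMap R₀ R₁ b ⊗ₜ Algebra.idealMap A₁ P p := by
  simp [lTensorIdealMap, smul_tmul', Algebra.smul_def]

theorem smul_lTensorIdealMap_eq_zero {P : Ideal A₀} {ι : Type*} [Fintype ι] {b : ι → R₀}
    {p : ι → P} {σ : R₁} (h : Module.IsTrivialRelation (fun i ↦ algebraMap A₀ A₁ (p i))
      fun i ↦ σ * algebraMap R₀ R₁ (b i)) :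
    σ • lTensorIdealMap P A₁ R₁ (∑ i, b i ⊗ₜ p i) = 0 := by
  obtain ⟨k, a, y, hy, ha⟩ := h
  have hvanish : VanishesTrivially A₁ (fun i ↦ Algebra.idealMap A₁ P (p i))
      (fun i ↦ σ * algebraMap R₀ R₁ (b i)) :=
    ⟨k, a, y, hy, fun j ↦ Subtype.ext <| by simpa [mul_comm] using ha j⟩
  simp only [map_sum, lTensorIdealMap_tmul, Finset.smul_sum, smul_tmul', smul_eq_mul]
  simpa using congrArg (TensorProduct.comm A₁ _ _)
    (sum_tmul_eq_zero_of_vanishesTrivially A₁ hvanish)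

theorem flat_tensorProduct_of_flat {A C : Type*} (Q : Type*) {R : Type*} [CommRing A] [CommRing Q]
    [CommRing R] [CommRing C] [Algebra A Q] [Algebra A R] [Algebra A C] [Algebra R C]
    [IsScalarTower A R C] [Module.Flat Q (Q ⊗[A] R)] [Module.Flat R C] :
    Module.Flat Q (Q ⊗[A] C) := by
  rw [← RingHom.flat_algebraMap_iff]
  have hQR : (algebraMap Q (Q ⊗[A] R)).Flat := RingHom.flat_algebraMap_iff.2 inferInstance
  have hRC : (IsScalarTower.toAlgHom A R C).Flat :=
    RingHom.flat_algebraMap_iff.2 (inferInstanceAs (Module.Flat R C))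
  convert hQR.comp (hRC.lTensor (S := A) Q)
  ext
  simp

theorem flat_quotient_tensorProduct (P : Ideal A₀) {N N₁ : Type*} [AddCommGroup N]
    [Module A₀ N] [AddCommGroup N₁] [Module A₀ N₁] [Module A₁ N₁] [IsScalarTower A₀ A₁ N₁]
    {g : N →ₗ[A₀] N₁} (hg : IsBaseChange A₁ g) [Module.Flat (A₀ ⧸ P) ((A₀ ⧸ P) ⊗[A₀] N)] :
    Module.Flat (A₁ ⧸ P.map (algebraMap A₀ A₁)) ((A₁ ⧸ P.map (algebraMap A₀ A₁)) ⊗[A₁] N₁) := by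
  let Q := A₁ ⧸ P.map (algebraMap A₀ A₁)
  have hle : P ≤ (P.map (algebraMap A₀ A₁)).comap (algebraMap A₀ A₁) := Ideal.le_comap_map
  let := Ideal.Quotient.algebraQuotientOfLEComap hle
  have : IsScalarTower A₀ (A₀ ⧸ P) Q := .of_algebraMap_eq' rfl
  let e : Q ⊗[A₁] N₁ ≃ₗ[Q] Q ⊗[A₀] N :=
    (hg.tensorEquiv Q).extendScalarsOfSurjective Ideal.Quotient.mk_surjective
  exact .of_linearEquiv (e ≪≫ₗ (AlgebraTensorModule.cancelBaseChange A₀ (A₀ ⧸ P) Q Q N).symm)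

theorem mem_torsion_of_lTensor_subtype_eq_zero [Algebra.IsPushout A₀ A₁ R₀ R₁] {P : Ideal A₀}
    [Module.Flat (A₀ ⧸ P) ((A₀ ⧸ P) ⊗[A₀] R₀)] {S : Submonoid R₁}
    (h : ∀ k, P.subtype.lTensor R₀ k = 0 → lTensorIdealMap P A₁ R₁ k ∈ Submodule.torsion' R₁ _ S)
    (y : R₁ ⊗[A₁] P.map (algebraMap A₀ A₁))
    (hy : (P.map (algebraMap A₀ A₁)).subtype.lTensor R₁ y = 0) :
    y ∈ Submodule.torsion' R₁ (R₁ ⊗[A₁] P.map (algebraMap A₀ A₁)) S := by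
  have : Algebra.IsPushout A₀ R₀ A₁ R₁ := .symm inferInstance
  let I := P.map (algebraMap A₀ A₁)
  let E : Submodule A₀ A₁ := P • ⊤
  have hE : E = I.restrictScalars A₀ := Ideal.smul_top_eq_map P
  let ε : E ≃ₗ[A₀] I :=
    .ofEq _ _ hE ≪≫ₗ (Submodule.restrictScalarsEquiv A₀ A₁ A₁ I).restrictScalars A₀
  let e : R₀ ⊗[A₀] E ≃ₗ[A₀] R₁ ⊗[A₁] I := ε.lTensor R₀ ≪≫ₗ
    (Algebra.IsPushout.cancelBaseChange A₀ R₀ A₁ R₁ I).symm.restrictScalars A₀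
  have he (b : R₀) (x : E) : e (b ⊗ₜ x) = algebraMap R₀ R₁ b ⊗ₜ ε x :=
    Algebra.IsPushout.cancelBaseChange_symm_tmul A₀ R₀ A₁ R₁ I b (ε x)
  let e' : R₀ ⊗[A₀] A₁ ≃ₗ[R₀] R₁ ⊗[A₁] A₁ :=
    (Algebra.IsPushout.cancelBaseChange A₀ R₀ A₁ R₁ A₁).symm
  have comm (x) : I.subtype.lTensor R₁ (e x) = e' (E.subtype.lTensor R₀ x) := by
    induction x with
    | zero => simp only [map_zero]
    | add x y hx hy => simp only [map_add, hx, hy]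
    | tmul b x => rw [he]; exact (Algebra.IsPushout.cancelBaseChange_symm_tmul ..).symm
  have hw (w : A₁) : e.toLinearMap ∘ₗ (idealSMulRight P w).lTensor R₀ =
      (algebraMap A₁ R₁ w • (lTensorIdealMap P A₁ R₁)).restrictScalars A₀ := by
    refine TensorProduct.ext' fun b p ↦ (he _ _).trans ?_
    simp only [LinearMap.restrictScalars_apply, LinearMap.smul_apply, lTensorIdealMap_tmul,
      algebraMap_smul, ← tmul_smul]
    congr 1
    ext
    exact (Algebra.smul_def (p : A₀) w).trans (mul_comm _ _)
  obtain ⟨x, rfl⟩ := e.surjective y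
  have hx : E.subtype.lTensor R₀ x = 0 := e'.injective <| by
    rw [← comm, hy, map_zero]
  have hle : (⨆ w : A₁, (LinearMap.ker (P.subtype.lTensor R₀)).map
        ((idealSMulRight P w).lTensor R₀)) ≤
      ((Submodule.torsion' R₁ (R₁ ⊗[A₁] I) S).restrictScalars A₀).comap e.toLinearMap := by
    refine iSup_le fun w ↦ Submodule.map_le_iff_le_comap.2 fun k hk ↦ ?_
    have := Submodule.smul_mem _ (algebraMap A₁ R₁ w) (h k hk)
    rwa [← LinearMap.smul_apply, ← LinearMap.restrictScalars_apply A₀, ← hw w] at this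
  exact hle (ker_lTensor_smul_top_le P hx)

theorem mem_flatLocus_of_isPushout [IsNoetherianRing A₁] [IsNoetherianRing R₁]
    [Algebra.IsPushout A₀ A₁ R₀ R₁] {P : Ideal A₀}
    [Module.Flat (A₀ ⧸ P) ((A₀ ⧸ P) ⊗[A₀] R₀)] {q : PrimeSpectrum R₁} (hP : P ≤ q.asIdeal.under A₀)
    (h : ∀ k, P.subtype.lTensor R₀ k = 0 →
      lTensorIdealMap P A₁ R₁ k ∈ Submodule.torsion' R₁ _ q.asIdeal.primeCompl) :
    q ∈ flatLocus A₁ R₁ := by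
  let I := P.map (algebraMap A₀ A₁)
  have := flat_quotient_tensorProduct (A₁ := A₁) P
    (g := (IsScalarTower.toAlgHom A₀ R₀ R₁).toLinearMap) Algebra.IsPushout.out
  have : Module.Flat (A₁ ⧸ I) ((A₁ ⧸ I) ⊗[A₁] Localization.AtPrime q.asIdeal) :=
    have := IsLocalization.flat (Localization.AtPrime q.asIdeal) q.asIdeal.primeCompl
    flat_tensorProduct_of_flat (A₁ ⧸ I) (R := R₁)
  refine flat_of_flat_quotient_of_lTensor_injective I (B := Localization.AtPrime q.asIdeal) _ ?_ ?_
  · rw [IsLocalRing.jacobson_eq_maximalIdeal _ bot_ne_top,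
      ← Localization.AtPrime.map_eq_maximalIdeal, IsScalarTower.algebraMap_eq A₁ R₁,
      ← Ideal.map_map]
    refine Ideal.map_mono ?_
    rwa [Ideal.map_map, ← IsScalarTower.algebraMap_eq A₀ A₁ R₁, Ideal.map_le_iff_le_comap]
  · rw [lTensor_injective_iff_of_isLocalizedModule q.asIdeal.primeCompl
      (Algebra.linearMap R₁ (Localization.AtPrime q.asIdeal))]
    intro y hy
    obtain ⟨s, hs⟩ := mem_torsion_of_lTensor_subtype_eq_zero h y hy
    exact ⟨s, s.2, hs⟩

theorem mem_flatLocus_of_isTrivialRelation [IsNoetherianRing A₁] [IsNoetherianRing R₁]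
    [Algebra.IsPushout A₀ A₁ R₀ R₁] {P : Ideal A₀} [Module.Flat (A₀ ⧸ P) ((A₀ ⧸ P) ⊗[A₀] R₀)]
    {q : PrimeSpectrum R₁} (hP : P ≤ q.asIdeal.under A₀) {T : Set (R₀ ⊗[A₀] P)}
    (hT : LinearMap.ker (AlgebraTensorModule.lTensor R₀ R₀ P.subtype) ≤ Submodule.span R₀ T)
    (h : ∀ k ∈ T, ∃ σ ∉ q.asIdeal, ∃ (n : ℕ) (b : Fin n → R₀) (p : Fin n → P),
      k = ∑ i, b i ⊗ₜ p i ∧ Module.IsTrivialRelation (fun i ↦ algebraMap A₀ A₁ (p i))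
        fun i ↦ σ * algebraMap R₀ R₁ (b i)) :
    q ∈ flatLocus A₁ R₁ := by
  refine mem_flatLocus_of_isPushout (R₀ := R₀) hP fun k hk ↦ ?_
  suffices Submodule.span R₀ T ≤ ((Submodule.torsion' R₁ _ q.asIdeal.primeCompl).restrictScalars
      R₀).comap (lTensorIdealMap P A₁ R₁) from this (hT hk)
  refine Submodule.span_le.2 fun k hk ↦ ?_
  obtain ⟨σ, hσ, n, b, p, rfl, hrel⟩ := h k hk
  have hsmul := smul_lTensorIdealMap_eq_zero hrel
  exact ⟨⟨σ, hσ⟩, hsmul⟩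

theorem mem_flatLocus_tensorProduct {B : Type*} [CommRing B] [Algebra A₀ B] [IsNoetherianRing B]
    [IsNoetherianRing (B ⊗[A₀] R₀)] {P : Ideal A₀} [Module.Flat (A₀ ⧸ P) ((A₀ ⧸ P) ⊗[A₀] R₀)]
    {q : PrimeSpectrum (B ⊗[A₀] R₀)} (hP : P ≤ q.asIdeal.under A₀) {T : Set (R₀ ⊗[A₀] P)}
    (hT : LinearMap.ker (AlgebraTensorModule.lTensor R₀ R₀ P.subtype) ≤ Submodule.span R₀ T)
    (h : ∀ k ∈ T, ∃ σ ∉ q.asIdeal, ∃ (n : ℕ) (b : Fin n → R₀) (p : Fin n → P),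
      k = ∑ i, b i ⊗ₜ p i ∧ Module.IsTrivialRelation (fun i ↦ algebraMap A₀ B (p i))
        fun i ↦ σ * 1 ⊗ₜ b i) :
    q ∈ flatLocus B (B ⊗[A₀] R₀) := by
  let := Algebra.TensorProduct.rightAlgebra (R := A₀) (A := B) (B := R₀)
  exact mem_flatLocus_of_isTrivialRelation hP hT h

end FiniteLevel

section FiniteLevelDescent
variable {A₀ A R₀ : Type*} [CommRing A₀] [CommRing A] [Algebra A₀ A] [CommRing R₀] [Algebra A₀ R₀]

theorem eventually_isTrivialRelation_of_mem_flatLocus {q : PrimeSpectrum (A ⊗[A₀] R₀)}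
    (hq : q ∈ flatLocus A (A ⊗[A₀] R₀)) {ι : Type*} [Fintype ι] {p : ι → A₀} {b : ι → R₀}
    (hpb : ∑ i, p i • b i = 0) :
    ∀ᶠ s : Finset A in Filter.atTop, ∃ τ : Algebra.adjoin A₀ (s : Set A) ⊗[A₀] R₀,
      Algebra.TensorProduct.map (Algebra.adjoin A₀ (s : Set A)).val (.id A₀ R₀) τ ∉ q.asIdeal ∧
      Module.IsTrivialRelation (fun i ↦ algebraMap A₀ (Algebra.adjoin A₀ (s : Set A)) (p i))
        fun i ↦ τ * 1 ⊗ₜ b i := by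
  have hpb' : ∑ i, algebraMap A₀ A (p i) • (1 : A) ⊗ₜ[A₀] b i = 0 := by
    simpa using congrArg (Algebra.TensorProduct.includeRight : R₀ →ₐ[A₀] A ⊗[A₀] R₀) hpb
  have : Module.Flat A (Localization.AtPrime q.asIdeal) := hq
  obtain ⟨σ, hσ, h⟩ := exists_isTrivialRelation_smul q.asIdeal.primeCompl
    (Algebra.linearMap (A ⊗[A₀] R₀) (Localization.AtPrime q.asIdeal)) hpb'
  filter_upwards [eventually_isTrivialRelation h] with s ⟨τ, hτ, hrel⟩
  exact ⟨τ, hτ ▸ hσ, hrel⟩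

theorem exists_fg_comap_mem_flatLocus [IsNoetherianRing A₀] [Algebra.FiniteType A₀ R₀]
    {q : PrimeSpectrum (A ⊗[A₀] R₀)} (hq : q ∈ flatLocus A (A ⊗[A₀] R₀))
    [Module.Flat (A₀ ⧸ q.asIdeal.under A₀) ((A₀ ⧸ q.asIdeal.under A₀) ⊗[A₀] R₀)] :
    ∃ B : Subalgebra A₀ A, B.FG ∧ PrimeSpectrum.comap
      (Algebra.TensorProduct.map B.val (.id A₀ R₀)).toRingHom q ∈ flatLocus B (B ⊗[A₀] R₀) := by
  let P := q.asIdeal.under A₀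
  have : IsNoetherianRing R₀ := Algebra.FiniteType.isNoetherianRing A₀ R₀
  obtain ⟨T, hT⟩ := IsNoetherian.noetherian
    (LinearMap.ker (AlgebraTensorModule.lTensor R₀ R₀ P.subtype))
  choose n b p hkbp using fun k : R₀ ⊗[A₀] P ↦ TensorProduct.exists_sum_tmul_eq k
  have hpb (k) (hk : k ∈ T) : ∑ i, (p k i : A₀) • b k i = 0 := by
    have hk0 : P.subtype.lTensor R₀ k = 0 := hT.le (Submodule.subset_span hk)
    rw [hkbp k] at hk0
    simpa using congrArg (TensorProduct.rid A₀ R₀) hk0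
  obtain ⟨B, hB, h⟩ : ∃ B : Subalgebra A₀ A, B.FG ∧ ∀ k ∈ T, ∃ τ : B ⊗[A₀] R₀,
      Algebra.TensorProduct.map B.val (.id A₀ R₀) τ ∉ q.asIdeal ∧
      Module.IsTrivialRelation (fun i ↦ algebraMap A₀ B (p k i)) fun i ↦ τ * 1 ⊗ₜ b k i := by
    obtain ⟨s, hs⟩ := ((Filter.eventually_all_finset T).2 fun k hk ↦
      eventually_isTrivialRelation_of_mem_flatLocus hq (hpb k hk)).exists
    exact ⟨_, Subalgebra.fg_adjoin_finset s, hs⟩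
  have : Algebra.FiniteType A₀ B := B.fg_iff_finiteType.1 hB
  have : IsNoetherianRing B := Algebra.FiniteType.isNoetherianRing A₀ B
  have : IsNoetherianRing (B ⊗[A₀] R₀) := Algebra.FiniteType.isNoetherianRing B _
  refine ⟨B, hB, mem_flatLocus_tensorProduct (P := P) ?_ hT.ge fun k hk ↦ ?_⟩
  · intro x (hx : algebraMap A₀ (A ⊗[A₀] R₀) x ∈ q.asIdeal)
    rwa [← AlgHom.commutes (Algebra.TensorProduct.map B.val (.id A₀ R₀))] at hx
  · obtain ⟨τ, hτ, hrel⟩ := h k hk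
    exact ⟨τ, hτ, _, b k, p k, hkbp k, hrel⟩

end FiniteLevelDescent

section FinitePresentation
variable {A₀ A R₀ : Type*} [CommRing A₀] [CommRing A] [Algebra A₀ A] [CommRing R₀] [Algebra A₀ R₀]

theorem preimage_flatLocus_tensorProduct_subset {B : Type*} [CommRing B] [Algebra A₀ B]
    (φ : B →ₐ[A₀] A) :
    PrimeSpectrum.comap (Algebra.TensorProduct.map φ (.id A₀ R₀)).toRingHom ⁻¹'
      flatLocus B (B ⊗[A₀] R₀) ⊆ flatLocus A (A ⊗[A₀] R₀) := by
  let := φ.toRingHom.toAlgebra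
  have : IsScalarTower A₀ B A := .of_algebraMap_eq fun x ↦ (φ.commutes x).symm
  let := (Algebra.TensorProduct.map φ (AlgHom.id A₀ R₀)).toRingHom.toAlgebra
  have : IsScalarTower B (B ⊗[A₀] R₀) (A ⊗[A₀] R₀) := .of_algebraMap_eq fun x ↦ by
    simp [RingHom.algebraMap_toAlgebra]
  have : Algebra.IsPushout B A (B ⊗[A₀] R₀) (A ⊗[A₀] R₀) := by
    apply Algebra.IsPushout.tensorProduct_tensorProduct
    ext x
    simp [RingHom.algebraMap_toAlgebra]
  exact preimage_flatLocus_subset A (A ⊗[A₀] R₀)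

theorem flatLocus_tensorProduct_mem_nhds [IsNoetherianRing A₀] [Algebra.FiniteType A₀ R₀]
    {q : PrimeSpectrum (A ⊗[A₀] R₀)} (hq : q ∈ flatLocus A (A ⊗[A₀] R₀))
    [Module.Flat (A₀ ⧸ q.asIdeal.under A₀) ((A₀ ⧸ q.asIdeal.under A₀) ⊗[A₀] R₀)] :
    flatLocus A (A ⊗[A₀] R₀) ∈ nhds q := by
  obtain ⟨B, hB, hqB⟩ := exists_fg_comap_mem_flatLocus hq
  have : Algebra.FiniteType A₀ B := B.fg_iff_finiteType.1 hB
  have : IsNoetherianRing B := Algebra.FiniteType.isNoetherianRing A₀ B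
  refine Filter.mem_of_superset (IsOpen.mem_nhds ?_ hqB)
    (preimage_flatLocus_tensorProduct_subset B.val)
  exact isOpen_flatLocus_of_isNoetherianRing.preimage (PrimeSpectrum.continuous_comap _)

theorem isLocalizationAway_one_tmul {g : R₀} (R₁ : Type*) [CommRing R₁]
    [Algebra R₀ R₁] [Algebra A₀ R₁] [IsScalarTower A₀ R₀ R₁] [IsLocalization.Away g R₁] :
    letI := (Algebra.TensorProduct.map (.id A A) (IsScalarTower.toAlgHom A₀ R₀ R₁)).toAlgebra
    IsLocalization.Away ((1 : A) ⊗ₜ[A₀] g) (A ⊗[A₀] R₁) := by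
  let := (Algebra.TensorProduct.map (.id A A) (IsScalarTower.toAlgHom A₀ R₀ R₁)).toAlgebra
  have : IsScalarTower A (A ⊗[A₀] R₀) (A ⊗[A₀] R₁) := .of_algHom _
  have := IsLocalization.tensorProduct_tensorProduct_right A₀ A (Submonoid.powers g) R₁ <| by
    ext x
    simp [RingHom.algebraMap_toAlgebra]
  rwa [Submonoid.map_powers] at this

theorem isOpen_flatLocus_tensorProduct [IsNoetherianRing A₀] [Algebra.FiniteType A₀ R₀] :
    IsOpen (flatLocus A (A ⊗[A₀] R₀)) := by
  refine isOpen_iff_mem_nhds.2 fun q hq ↦ ?_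
  let P := q.asIdeal.under A₀
  obtain ⟨g, hg, hflat⟩ := exists_flat_quotient_tensor_localization (R := R₀) P
  let r := algebraMap A₀ R₀ g
  let C := A ⊗[A₀] Localization.Away r
  let := (Algebra.TensorProduct.map (.id A A)
    (IsScalarTower.toAlgHom A₀ R₀ (Localization.Away r))).toAlgebra
  have : IsScalarTower A (A ⊗[A₀] R₀) C := .of_algHom _
  have : IsScalarTower A₀ (A ⊗[A₀] R₀) C := .to₁₃₄ A₀ A (A ⊗[A₀] R₀) C
  have : IsLocalization.Away ((1 : A) ⊗ₜ[A₀] r) C := isLocalizationAway_one_tmul _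
  obtain ⟨q', rfl⟩ : q ∈ Set.range (PrimeSpectrum.comap (algebraMap (A ⊗[A₀] R₀) C)) := by
    rw [PrimeSpectrum.localization_away_comap_range C ((1 : A) ⊗ₜ[A₀] r)]
    rwa [SetLike.mem_coe, PrimeSpectrum.mem_basicOpen, ← Algebra.TensorProduct.algebraMap_apply']
  rw [flatLocus_mem_nhds_of_isLocalizationAway (g := (1 : A) ⊗ₜ[A₀] r)]
  have hP : q'.asIdeal.under A₀ = P :=
    (Ideal.under_under (B := A ⊗[A₀] R₀) q'.asIdeal).symm
  have := hflat (Submonoid.powers r) (Submonoid.mem_powers r)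
  rw [← hP] at this
  apply flatLocus_tensorProduct_mem_nhds
  rwa [← preimage_flatLocus_eq (Submonoid.powers ((1 : A) ⊗ₜ[A₀] r))]

theorem isOpen_flatLocus {A R : Type*} [CommRing A] [CommRing R] [Algebra A R]
    [Algebra.FinitePresentation A R] : IsOpen (flatLocus A R) := by
  let P := Algebra.Presentation.ofFinitePresentation A R
  have : IsNoetherianRing P.Core := Algebra.FiniteType.isNoetherianRing ℤ _
  exact isOpen_flatLocus_of_algEquiv (P.tensorModelOfHasCoeffsEquiv P.Core)
    isOpen_flatLocus_tensorProduct

end FinitePresentation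

section Neighborhood
variable {R : Type*} [CommRing R]

theorem exists_basicOpen_subset_of_zeroLocus_subset {J : Ideal R} {U : Set (PrimeSpectrum R)}
    (hU : IsOpen U) (hJ : PrimeSpectrum.zeroLocus (J : Set R) ⊆ U) :
    ∃ f : R, f - 1 ∈ J ∧ (PrimeSpectrum.basicOpen f : Set (PrimeSpectrum R)) ⊆ U := by
  obtain ⟨K, hK⟩ := (PrimeSpectrum.isClosed_iff_zeroLocus_ideal _).1 hU.isClosed_compl
  have hKJ : K ⊔ J = ⊤ := by
    rw [← PrimeSpectrum.zeroLocus_empty_iff_eq_top, PrimeSpectrum.zeroLocus_sup, ← hK,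
      Set.inter_comm, ← Set.sdiff_eq, Set.sdiff_eq_empty]
    exact hJ
  obtain ⟨f, hf, j, hj, hfj⟩ := Submodule.mem_sup.1 ((Ideal.eq_top_iff_one _).1 hKJ)
  refine ⟨f, ?_, ?_⟩
  · rw [← hfj, sub_add_cancel_left]
    exact J.neg_mem hj
  · rw [← Set.compl_subset_compl, PrimeSpectrum.basicOpen_eq_zeroLocus_compl, compl_compl, hK]
    exact PrimeSpectrum.zeroLocus_anti_mono (Set.singleton_subset_iff.2 hf)

theorem bijective_quotientMap_of_isLocalizationAway {J : Ideal R} {f : R} (hf : f - 1 ∈ J)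
    (C : Type*) [CommRing C] [Algebra R C] [IsLocalization.Away f C] :
    Function.Bijective
      (Ideal.quotientMap (J.map (algebraMap R C)) (algebraMap R C) Ideal.le_comap_map) := by
  have hone : Ideal.Quotient.mk J f = 1 := Ideal.Quotient.eq.2 hf
  refine (IsLocalization.atUnits (R ⧸ J) (S := C ⧸ J.map (algebraMap R C))
    (Algebra.algebraMapSubmonoid (R ⧸ J) (Submonoid.powers f)) ?_).bijective
  rintro _ ⟨_, ⟨n, rfl⟩, rfl⟩
  simp [hone]

end Neighborhood

theorem ringHomFlat_algebraMap_comp_iff {A R C : Type u} [CommRing A] [CommRing R] [CommRing C]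
    [Algebra A R] [Algebra R C] [Algebra A C] [IsScalarTower A R C] :
    RingHomFlat ((algebraMap R C).comp (algebraMap A R)) ↔ Module.Flat A C := by
  rw [← IsScalarTower.algebraMap_eq, RingHomFlat, toAlgebra_algebraMap]

theorem exists_etale_flat_of_flat_on_closed_fiber_general {A R : Type u} [CommRing A] [CommRing R]
    [Algebra A R] [Algebra.FinitePresentation A R] (J : Ideal R)
    (hflat : ∀ (q : Ideal R) (_ : q.IsPrime), J ≤ q →
      RingHomFlat ((algebraMap R (Localization.AtPrime q)).comp (algebraMap A R))) :
    ∃ (R' : Type u) (_ : CommRing R') (_ : Algebra R R'),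
      Algebra.Etale R R' ∧
      Function.Bijective (Ideal.quotientMap (J.map (algebraMap R R')) (algebraMap R R')
        Ideal.le_comap_map) ∧
      RingHomFlat ((algebraMap R R').comp (algebraMap A R)) := by
  obtain ⟨f, hfJ, hf⟩ := exists_basicOpen_subset_of_zeroLocus_subset (isOpen_flatLocus (A := A))
    fun q hq ↦ ringHomFlat_algebraMap_comp_iff.1 (hflat q.asIdeal q.isPrime hq)
  exact ⟨Localization.Away f, inferInstance, inferInstance, .of_isLocalizationAway f,
    bijective_quotientMap_of_isLocalizationAway hfJ _,
    ringHomFlat_algebraMap_comp_iff.2 (flat_localizationAway hf)⟩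

/-- Spreading out flatness over a Henselian pair: if the finitely presented `A`-algebra `R`
is flat over `A` at every prime containing `I·R`, then there is an étale `R`-algebra `R'`
with `R/IR ≅ R'/IR'` which is flat over `A`. -/
theorem exists_etale_flat_of_flat_on_closed_fiber
    {A R : Type u} [CommRing A] [CommRing R] [Algebra A R]
    (I : Ideal A) [HenselianRing A I]
    (hfp : Algebra.FinitePresentation A R)
    (hflat : ∀ (q : Ideal R) (_ : q.IsPrime), I.map (algebraMap A R) ≤ q →
      RingHomFlat ((algebraMap R (Localization.AtPrime q)).comp (algebraMap A R))) :
    ∃ (R' : Type u) (_ : CommRing R') (_ : Algebra R R'),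
      Algebra.Etale R R' ∧
      Function.Bijective (Ideal.quotientMap
        ((I.map (algebraMap A R)).map (algebraMap R R')) (algebraMap R R')
        Ideal.le_comap_map) ∧
      RingHomFlat ((algebraMap R R').comp (algebraMap A R)) := by
  exact exists_etale_flat_of_flat_on_closed_fiber_general (I.map (algebraMap A R)) hflat
end

section
/- Germs of smooth functions form a non-separated Henselian pair: fix n ≥ 1, let R be the ring of germs at the origin of C^∞ functions ℝⁿ → ℝ (germs at 0 of functions that are smooth on a neighborhood of 0, i.e. the corresponding subring of the germ ring Filter.Germ (𝓝 0) ℝ), and let I ⊆ R be the ideal of germs vanishing at the origin. Then (R, I) is a Henselian pair. Moreover, the germ of the function x ↦ exp(−1/‖x‖²) (extended by 0 at the origin) is a nonzero element of ⋂_{r ≥ 1} I^r; in particular R is not I-adically separated. -/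
open scoped Topology

open Filter Classical

/-- The subring of `Filter.Germ (𝓝 0) ℝ` consisting of germs at the origin of functions
`ℝⁿ → ℝ` that are `C^∞` on a neighborhood of the origin. -/
noncomputable def smoothGerms (n : ℕ) :
    Subring (Filter.Germ (𝓝 (0 : EuclideanSpace ℝ (Fin n))) ℝ) where
  carrier := {φ | ∃ f : EuclideanSpace ℝ (Fin n) → ℝ,
    (∀ᶠ x in 𝓝 (0 : EuclideanSpace ℝ (Fin n)), ContDiffAt ℝ (⊤ : ℕ∞) f x) ∧ φ = Filter.Germ.ofFun f}
  one_mem' := ⟨fun _ => 1, Filter.Eventually.of_forall fun _ => contDiffAt_const, rfl⟩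
  zero_mem' := ⟨fun _ => 0, Filter.Eventually.of_forall fun _ => contDiffAt_const, rfl⟩
  mul_mem' := by
    rintro a b ⟨f, hf, rfl⟩ ⟨g, hg, rfl⟩
    exact ⟨f * g, (hf.and hg).mono fun x hx => hx.1.mul hx.2, rfl⟩
  add_mem' := by
    rintro a b ⟨f, hf, rfl⟩ ⟨g, hg, rfl⟩
    exact ⟨f + g, (hf.and hg).mono fun x hx => hx.1.add hx.2, rfl⟩
  neg_mem' := by
    rintro a ⟨f, hf, rfl⟩
    exact ⟨-f, hf.mono fun x hx => hx.neg, rfl⟩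

/-- Evaluation at the origin, as a ring homomorphism on germs of smooth functions. -/
noncomputable def smoothGermsEval (n : ℕ) : smoothGerms n →+* ℝ :=
  Filter.Germ.valueRingHom.comp (smoothGerms n).subtype

/-!
The ring of germs is local with residue field `ℝ`, via evaluation at the origin. A polynomial over
it is the germ of a family of real polynomials whose coefficients vary smoothly with the base point,
and a simple root at the origin spreads out smoothly by the implicit function theorem. The germ of
`exp (-1/‖x‖²)` lies in every `I ^ r` because `exp (-1/t) = t ^ r * g t` with `g` smooth, at
`t = ‖x‖²`.
-/

section PartialDerivative

open scoped ContDiff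

variable {𝕜 : Type*} [NontriviallyNormedField 𝕜]
  {E₁ : Type*} [NormedAddCommGroup E₁] [NormedSpace 𝕜 E₁]
  {E₂ : Type*} [NormedAddCommGroup E₂] [NormedSpace 𝕜 E₂]
  {F : Type*} [NormedAddCommGroup F] [NormedSpace 𝕜 F]

theorem eventually_isInvertible_fderiv_comp_inr [CompleteSpace E₂] {f : E₁ × E₂ → F}
    {u : E₁ × E₂} {k : ℕ∞ω}
    (hf : ContDiffAt 𝕜 k f u) (hk : k ≠ 0)
    (hinv : (fderiv 𝕜 f u ∘L .inr 𝕜 E₁ E₂).IsInvertible) :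
    ∀ᶠ v in 𝓝 u, (fderiv 𝕜 f v ∘L .inr 𝕜 E₁ E₂).IsInvertible := by
  have hcont : ContinuousAt (fun v => fderiv 𝕜 f v ∘L .inr 𝕜 E₁ E₂) u :=
    (hf.continuousAt_fderiv hk).clm_comp continuousAt_const
  exact hcont.eventually (ContinuousLinearEquiv.isOpen.mem_nhds hinv)

theorem isInvertible_fderiv_comp_inr_of_hasDerivAt {f : E₁ × 𝕜 → 𝕜} {x : E₁} {t f' : 𝕜}
    (hf : DifferentiableAt 𝕜 f (x, t)) (hderiv : HasDerivAt (fun s => f (x, s)) f' t)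
    (hf' : f' ≠ 0) : (fderiv 𝕜 f (x, t) ∘L .inr 𝕜 E₁ 𝕜).IsInvertible := by
  have hslice : HasFDerivAt (fun s => f (x, s)) (fderiv 𝕜 f (x, t) ∘L .inr 𝕜 E₁ 𝕜) t :=
    hf.hasFDerivAt.comp t (hasFDerivAt_prodMk_right x t)
  rw [hslice.unique (hderiv.hasFDerivAt_equiv hf')]
  exact ContinuousLinearMap.isInvertible_equiv

end PartialDerivative

section ImplicitFunction

open scoped ContDiff

variable {𝕜 : Type*} [RCLike 𝕜]
  {E₁ : Type*} [NormedAddCommGroup E₁] [NormedSpace 𝕜 E₁] [CompleteSpace E₁]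
  {E₂ : Type*} [NormedAddCommGroup E₂] [NormedSpace 𝕜 E₂] [CompleteSpace E₂]
  {F : Type*} [NormedAddCommGroup F] [NormedSpace 𝕜 F] [CompleteSpace F]

/-- For `k = ∞`, `ContDiffAt 𝕜 k` at a point only controls each finite order near that point, so
smoothness of the implicit function on a neighborhood is not formal. It holds because the implicit
functions based at nearby points of the graph all agree locally, by uniqueness. -/
theorem eventually_contDiffAt_implicitFunction {f : E₁ × E₂ → F} {u : E₁ × E₂} {k : ℕ∞ω}
    (hf : ∀ᶠ v in 𝓝 u, ContDiffAt 𝕜 k f v) (hk : k ≠ 0)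
    (hinv : (fderiv 𝕜 f u ∘L .inr 𝕜 E₁ E₂).IsInvertible) :
    ∀ᶠ x in 𝓝 u.1, ContDiffAt 𝕜 k (hf.self_of_nhds.implicitFunction hk hinv) x := by
  have hfu := hf.self_of_nhds
  set ψ := hfu.implicitFunction hk hinv
  have hψ : ContDiffAt 𝕜 k ψ u.1 := hfu.contDiffAt_implicitFunction hk hinv
  have hψ_cont : ∀ᶠ x in 𝓝 u.1, ContinuousAt ψ x :=
    ((hψ.of_le (ENat.one_le_iff_ne_zero_withTop.2 hk)).eventually (by simp)).mono
      fun x hx => hx.continuousAt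
  have hgraph : Tendsto (fun x => (x, ψ x)) (𝓝 u.1) (𝓝 u) := by
    simpa [ψ, hfu.implicitFunction_apply_self hk hinv] using
      (continuousAt_id.prodMk hψ.continuousAt).tendsto
  filter_upwards [hψ_cont, hgraph.eventually hf,
    hgraph.eventually (eventually_isInvertible_fderiv_comp_inr hfu hk hinv),
    (hfu.eventually_apply_implicitFunction hk hinv).eventually_nhds] with x hcont hfx hinvx hψ_eq
  have heq : hfx.implicitFunction hk hinvx =ᶠ[𝓝 x] ψ := by
    have hgraphx : Tendsto (fun y => (y, ψ y)) (𝓝 x) (𝓝 (x, ψ x)) :=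
      continuousAt_id.prodMk hcont
    filter_upwards [hgraphx.eventually (hfx.eventually_apply_eq_iff_implicitFunction hk hinvx),
      hψ_eq] with y huniq hy
    exact huniq.1 (hy.trans hψ_eq.self_of_nhds.symm)
  exact (hfx.contDiffAt_implicitFunction hk hinvx).congr_of_eventuallyEq heq.symm

end ImplicitFunction

section SmoothFamilies

open Polynomial
open scoped ContDiff

/-- The polynomial at `x` of the family of polynomials encoded by a polynomial `P` whose
coefficients are functions of `x`. -/
noncomputable def polynomialAt {E R : Type*} [CommSemiring R] (P : (E → R)[X]) (x : E) : R[X] :=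
  P.map (Pi.evalRingHom (fun _ => R) x)

theorem eval_polynomialAt_apply {E R : Type*} [CommSemiring R] (P : (E → R)[X]) (φ : E → R)
    (x : E) : (polynomialAt P x).eval (φ x) = P.eval φ x :=
  Polynomial.eval_map_apply (f := Pi.evalRingHom (fun _ => R) x) φ

variable {𝕜 : Type*} {E : Type*} [NormedAddCommGroup E]

theorem eventually_contDiffAt_eval_polynomialAt [NontriviallyNormedField 𝕜] [NormedSpace 𝕜 E]
    {k : ℕ∞ω} {P : (E → 𝕜)[X]} {x₀ : E}
    (hP : ∀ i, ∀ᶠ x in 𝓝 x₀, ContDiffAt 𝕜 k (P.coeff i) x) (t₀ : 𝕜) :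
    ∀ᶠ p in 𝓝 (x₀, t₀), ContDiffAt 𝕜 k (fun q : E × 𝕜 => (polynomialAt P q.1).eval q.2) p := by
  have heval : (fun q : E × 𝕜 => (polynomialAt P q.1).eval q.2) =
      fun q => ∑ i ∈ Finset.range (P.natDegree + 1), P.coeff i q.1 * q.2 ^ i := by
    funext q
    rw [polynomialAt, eval_map, eval₂_eq_sum_range]
    rfl
  have hcoeff : ∀ᶠ x in 𝓝 x₀, ∀ i ∈ Finset.range (P.natDegree + 1),
      ContDiffAt 𝕜 k (P.coeff i) x :=
    (eventually_all_finset _).2 fun i _ => hP i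
  rw [heval]
  filter_upwards [(continuous_fst.tendsto (x₀, t₀)).eventually hcoeff] with p hp
  exact ContDiffAt.sum fun i hi =>
    ((hp i hi).comp p contDiffAt_fst).mul (contDiffAt_snd.pow i)

theorem exists_contDiffAt_root_of_simple_root [RCLike 𝕜] [NormedSpace 𝕜 E] [CompleteSpace E]
    {k : ℕ∞ω} (hk : k ≠ 0) {P : (E → 𝕜)[X]} {x₀ : E} {t₀ : 𝕜}
    (hP : ∀ i, ∀ᶠ x in 𝓝 x₀, ContDiffAt 𝕜 k (P.coeff i) x)
    (hroot : (polynomialAt P x₀).IsRoot t₀)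
    (hsimple : (polynomialAt P x₀).derivative.eval t₀ ≠ 0) :
    ∃ φ : E → 𝕜, φ x₀ = t₀ ∧ (∀ᶠ x in 𝓝 x₀, ContDiffAt 𝕜 k φ x) ∧ P.eval φ =ᶠ[𝓝 x₀] 0 := by
  have hG := eventually_contDiffAt_eval_polynomialAt hP t₀
  have hG₀ := hG.self_of_nhds
  have hinv := isInvertible_fderiv_comp_inr_of_hasDerivAt (hG₀.differentiableAt hk)
    ((polynomialAt P x₀).hasDerivAt t₀) hsimple
  refine ⟨hG₀.implicitFunction hk hinv, hG₀.implicitFunction_apply_self hk hinv,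
    eventually_contDiffAt_implicitFunction hG hk hinv, ?_⟩
  filter_upwards [hG₀.eventually_apply_implicitFunction hk hinv] with x hx
  rw [← eval_polynomialAt_apply]
  exact hx.trans hroot

end SmoothFamilies

section SmoothGerms

open Polynomial
open scoped ContDiff

variable {n : ℕ}

theorem coe_mem_smoothGerms_iff {f : EuclideanSpace ℝ (Fin n) → ℝ} :
    (f : Germ (𝓝 (0 : EuclideanSpace ℝ (Fin n))) ℝ) ∈ smoothGerms n ↔
      ∀ᶠ x in 𝓝 0, ContDiffAt ℝ ∞ f x := by
  refine ⟨?_, fun hf => ⟨f, hf, rfl⟩⟩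
  rintro ⟨g, hg, hfg⟩
  filter_upwards [hg, (Germ.coe_eq.1 hfg).eventually_nhds] with x hgx hx
  exact hgx.congr_of_eventuallyEq hx

theorem coe_mem_smoothGerms_of_contDiff {f : EuclideanSpace ℝ (Fin n) → ℝ}
    (hf : ContDiff ℝ ∞ f) :
    (f : Germ (𝓝 (0 : EuclideanSpace ℝ (Fin n))) ℝ) ∈ smoothGerms n :=
  coe_mem_smoothGerms_iff.2 (Eventually.of_forall fun _ => hf.contDiffAt)

theorem coe_comp_mem_smoothGerms {g : ℝ → ℝ} {f : EuclideanSpace ℝ (Fin n) → ℝ}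
    (hg : ContDiff ℝ ∞ g)
    (hf : (f : Germ (𝓝 (0 : EuclideanSpace ℝ (Fin n))) ℝ) ∈ smoothGerms n) :
    ((g ∘ f : EuclideanSpace ℝ (Fin n) → ℝ) : Germ (𝓝 (0 : EuclideanSpace ℝ (Fin n))) ℝ) ∈
      smoothGerms n :=
  coe_mem_smoothGerms_iff.2 <|
    (coe_mem_smoothGerms_iff.1 hf).mono fun x hx => hg.contDiffAt.comp x hx

theorem smoothGermsEval_surjective : Function.Surjective (smoothGermsEval n) := fun c =>
  ⟨⟨_, coe_mem_smoothGerms_of_contDiff (contDiff_const (c := c))⟩, rfl⟩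

instance isLocalHom_smoothGermsEval : IsLocalHom (smoothGermsEval n) where
  map_nonunit := by
    rintro ⟨_, f, hf, rfl⟩ hunit
    have hf0 : ∀ᶠ x in 𝓝 0, f x ≠ 0 :=
      hf.self_of_nhds.continuousAt.eventually_ne hunit.ne_zero
    have hinv : ∀ᶠ x in 𝓝 0, ContDiffAt ℝ ∞ (fun y => (f y)⁻¹) x := by
      filter_upwards [hf, hf0] with x hx hx0 using hx.inv hx0
    refine IsUnit.of_mul_eq_one ⟨_, coe_mem_smoothGerms_iff.2 hinv⟩ (Subtype.ext ?_)
    exact Germ.coe_eq.2 (hf0.mono fun x hx => mul_inv_cancel₀ hx)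

instance isLocalRing_smoothGerms : IsLocalRing (smoothGerms n) :=
  (smoothGermsEval n).domain_isLocalRing

theorem exists_map_coeRingHom_eq_map_subtype (F : (smoothGerms n)[X]) :
    ∃ P : (EuclideanSpace ℝ (Fin n) → ℝ)[X],
      P.map (Germ.coeRingHom (𝓝 0)) = F.map (smoothGerms n).subtype ∧
      (∀ i, ∀ᶠ x in 𝓝 0, ContDiffAt ℝ ∞ (P.coeff i) x) ∧
      polynomialAt P 0 = F.map (smoothGermsEval n) := by
  have hsurj : Function.Surjective
      (Germ.coeRingHom (𝓝 (0 : EuclideanSpace ℝ (Fin n))) : _ →+* Germ _ ℝ) :=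
    Quot.mk_surjective
  obtain ⟨P, hP⟩ := map_surjective _ hsurj (F.map (smoothGerms n).subtype)
  refine ⟨P, hP, fun i => coe_mem_smoothGerms_iff.1 ?_, ?_⟩
  · have hcoeff : Germ.coeRingHom (𝓝 0) (P.coeff i) = (smoothGerms n).subtype (F.coeff i) := by
      simpa only [coeff_map] using congrArg (coeff · i) hP
    exact Set.mem_of_eq_of_mem hcoeff (F.coeff i).2
  · rw [smoothGermsEval, ← Polynomial.map_map, ← hP, Polynomial.map_map]
    rfl

theorem exists_isRoot_smoothGerms (F : (smoothGerms n)[X]) (a₀ : smoothGerms n)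
    (hroot : smoothGermsEval n (F.eval a₀) = 0)
    (hsimple : smoothGermsEval n (F.derivative.eval a₀) ≠ 0) :
    ∃ a, F.IsRoot a ∧ smoothGermsEval n a = smoothGermsEval n a₀ := by
  obtain ⟨P, hPF, hPsmooth, hP0⟩ := exists_map_coeRingHom_eq_map_subtype F
  obtain ⟨φ, hφ0, hφ, hPφ⟩ := exists_contDiffAt_root_of_simple_root
    (t₀ := smoothGermsEval n a₀) (by simp) hPsmooth
    (by rw [hP0, IsRoot, eval_map_apply, hroot])
    (by rwa [hP0, derivative_map, eval_map_apply])
  refine ⟨⟨_, coe_mem_smoothGerms_iff.2 hφ⟩, Subtype.ext ?_, hφ0⟩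
  calc (smoothGerms n).subtype (F.eval ⟨_, coe_mem_smoothGerms_iff.2 hφ⟩)
      = (P.map (Germ.coeRingHom (𝓝 0))).eval (Germ.coeRingHom (𝓝 0) φ) := by
        rw [hPF, ← eval_map_apply]
        rfl
    _ = Germ.coeRingHom (𝓝 0) (P.eval φ) := by rw [eval_map_apply]
    _ = 0 := Germ.coe_eq.2 hPφ

theorem ker_smoothGermsEval :
    RingHom.ker (smoothGermsEval n) = IsLocalRing.maximalIdeal (smoothGerms n) :=
  IsLocalRing.ker_eq_maximalIdeal _ smoothGermsEval_surjective

instance henselianLocalRing_smoothGerms : HenselianLocalRing (smoothGerms n) where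
  is_henselian F _ a₀ hroot hsimple := by
    rw [← ker_smoothGermsEval, RingHom.mem_ker] at hroot
    obtain ⟨a, ha, haa₀⟩ :=
      exists_isRoot_smoothGerms F a₀ hroot (hsimple.map (smoothGermsEval n)).ne_zero
    refine ⟨a, ha, ?_⟩
    rw [← ker_smoothGermsEval, RingHom.mem_ker, map_sub, haa₀, sub_self]

end SmoothGerms

section FlatFunction

open scoped ContDiff

variable {E : Type*} [NormedAddCommGroup E]

theorem ite_exp_neg_one_div_norm_sq_eq_expNegInvGlue [DecidableEq E] :
    (fun x : E => if x = 0 then (0 : ℝ) else Real.exp (-1 / ‖x‖ ^ 2)) =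
      fun x => expNegInvGlue (‖x‖ ^ 2) := by
  funext x
  by_cases hx : x = 0
  · simp [hx]
  · have hpos : 0 < ‖x‖ ^ 2 := by positivity
    simp [hx, expNegInvGlue, hpos.not_ge, neg_div]

theorem expNegInvGlue_norm_sq_not_eventuallyEq_zero [(𝓝[≠] (0 : E)).NeBot] :
    ¬ (fun x : E => expNegInvGlue (‖x‖ ^ 2)) =ᶠ[𝓝 0] 0 := by
  intro h
  obtain ⟨x, hx, hx0⟩ :=
    ((h.filter_mono nhdsWithin_le_nhds).and self_mem_nhdsWithin).exists (f := 𝓝[≠] (0 : E))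
  have hpos : 0 < ‖x‖ ^ 2 := pow_pos (norm_pos_iff.2 hx0) 2
  exact (expNegInvGlue.pos_of_pos hpos).ne' hx

theorem exists_contDiff_expNegInvGlue_eq_pow_mul (r : ℕ) :
    ∃ g : ℝ → ℝ, ContDiff ℝ ∞ g ∧ ∀ t, expNegInvGlue t = t ^ r * g t := by
  refine ⟨_, expNegInvGlue.contDiff_polynomial_eval_inv_mul (.X ^ r), fun t => ?_⟩
  obtain rfl | ht := eq_or_ne t 0
  · simp
  · simp [ht]

theorem expNegInvGlue_comp_mem_ker_smoothGermsEval_pow {n : ℕ}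
    {f : EuclideanSpace ℝ (Fin n) → ℝ}
    (hf : (f : Germ (𝓝 (0 : EuclideanSpace ℝ (Fin n))) ℝ) ∈ smoothGerms n) (hf0 : f 0 = 0)
    (r : ℕ) :
    (⟨_, coe_comp_mem_smoothGerms expNegInvGlue.contDiff hf⟩ : smoothGerms n) ∈
      RingHom.ker (smoothGermsEval n) ^ r := by
  obtain ⟨g, hg, hfactor⟩ := exists_contDiff_expNegInvGlue_eq_pow_mul r
  let a : smoothGerms n := ⟨_, hf⟩
  let b : smoothGerms n := ⟨_, coe_comp_mem_smoothGerms hg hf⟩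
  have ha : a ∈ RingHom.ker (smoothGermsEval n) := hf0
  have hab : (⟨_, coe_comp_mem_smoothGerms expNegInvGlue.contDiff hf⟩ : smoothGerms n) =
      a ^ r * b :=
    Subtype.ext (congrArg Germ.ofFun (funext fun x => hfactor (f x)))
  rw [hab]
  exact Ideal.mul_mem_right _ _ (Ideal.pow_mem_pow ha r)

end FlatFunction

/-- The ring `R` of germs at the origin of `C^∞` functions `ℝⁿ → ℝ`, together with the ideal
`I` of germs vanishing at the origin, forms a Henselian pair; moreover the germ of
`x ↦ exp (-1/‖x‖²)` (extended by `0` at the origin) is a nonzero element of `⋂_{r ≥ 1} I^r`,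
so `R` is not `I`-adically separated. -/
theorem smoothGerms_henselianRing_and_not_separated (n : ℕ) (hn : 1 ≤ n) :
    HenselianRing (smoothGerms n) (RingHom.ker (smoothGermsEval n)) ∧
    ∃ hmem : Filter.Germ.ofFun
        (fun x : EuclideanSpace ℝ (Fin n) =>
          if x = 0 then 0 else Real.exp (-1 / ‖x‖ ^ 2)) ∈ smoothGerms n,
      (⟨_, hmem⟩ : smoothGerms n) ≠ 0 ∧
      ∀ r : ℕ, 1 ≤ r →
        (⟨_, hmem⟩ : smoothGerms n) ∈ RingHom.ker (smoothGermsEval n) ^ r := by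
  refine ⟨ker_smoothGermsEval ▸ inferInstance, ?_⟩
  have : Nonempty (Fin n) := ⟨⟨0, hn⟩⟩
  have hnorm : Germ.ofFun (fun x : EuclideanSpace ℝ (Fin n) => ‖x‖ ^ 2) ∈ smoothGerms n :=
    coe_mem_smoothGerms_of_contDiff (contDiff_norm_sq ℝ)
  rw [ite_exp_neg_one_div_norm_sq_eq_expNegInvGlue]
  refine ⟨coe_comp_mem_smoothGerms expNegInvGlue.contDiff hnorm, fun h => ?_,
    fun r _ => expNegInvGlue_comp_mem_ker_smoothGermsEval_pow hnorm (by simp) r⟩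
  exact expNegInvGlue_norm_sq_not_eventuallyEq_zero (Germ.coe_eq.1 (congrArg Subtype.val h))
end

section
/- Henselization is insensitive to étale extensions that are isomorphisms modulo the ideal: let R be a commutative ring with an ideal I, and let S be an étale R-algebra such that the induced map R/I → S/(I·S) is an isomorphism. If ρ : R → H exhibits H as a Henselization of the pair (R, I), then there exists a ring homomorphism σ : S → H with σ ∘ (R → S) = ρ which exhibits H as a Henselization of the pair (S, I·S). In particular, the Henselization of (R, I) is isomorphic as an R-algebra to the Henselization of (S, I·S). -/
universe u

/-
Étale algebras lift uniquely along Henselian pairs: if `S` is étale over `R` and `(C, J)` is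
Henselian, every `R`-algebra map `S → C ⧸ J` has a unique lift `S → C`. When `R ⧸ I ≅ S ⧸ I S`, a
map `R → C` sending `I` into `J` has a unique extension `S → C ⧸ J`, hence a unique extension
`S → C`. So maps from `(R, I)` and from `(S, I S)` to Henselian pairs are the same thing.

For the lifting, base change to `R = C = A`. By Zariski's main theorem, near a given point
`s : S → A ⧸ I` the algebra `S` agrees with a finite subalgebra `B`. Since `S` is unramified, `s`
is isolated in the fibre, so some `b ∈ B` is `1` at `s` and kills, modulo `I`, all functions
vanishing at `s`. Multiplication by `b` then has a characteristic polynomial congruent to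
`(X - 1) X ^ n`; Hensel's lemma lifts the simple root `1` and its eigenprojection is an idempotent
`e` with `e S = A e`. Hence `S[1/e]` is an étale quotient of `A` by an ideal contained in `I`,
and such an ideal is finitely generated and idempotent, so it vanishes by Nakayama.
-/

section FiniteAlgebras

open Polynomial

theorem exists_monic_aeval_eq_zero_of_sub_smul_mem {A M ι : Type*} [CommRing A] [AddCommGroup M]
    [Module A M] [Fintype ι] (I : Ideal A) (v : ι → M) (hv : Submodule.span A (Set.range v) = ⊤)
    (d : ι → A) (φ : Module.End A M) (hφ : ∀ j, φ (v j) - d j • v j ∈ I • (⊤ : Submodule A M)) :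
    ∃ f : A[X], f.Monic ∧ aeval φ f = 0 ∧
      f.map (Ideal.Quotient.mk I) = ∏ j, (X - C (Ideal.Quotient.mk I (d j))) := by
  classical
  have hcoord : ∀ j, ∃ c : ι → A, (∀ i, c i ∈ I) ∧ ∑ i, c i • v i = φ (v j) - d j • v j := by
    intro j
    obtain ⟨c, hcI, hc⟩ := (Submodule.mem_ideal_smul_span_iff_exists_sum I v _).1 (hv ▸ hφ j)
    exact ⟨c, hcI, by rw [← hc, Finsupp.sum_fintype _ _ fun i => zero_smul A (v i)]⟩
  choose c hcI hc using hcoord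
  let N : Matrix ι ι A := Matrix.of fun i j => c j i
  let Φ : Matrix ι ι A := N + Matrix.diagonal d
  have hΦ : Φ.Represents v φ := by
    rw [Matrix.represents_iff']
    intro j
    simp [Φ, N, add_smul, Finset.sum_add_distrib, hc, Matrix.diagonal_apply, ite_smul]
  let Ψ : Matrix.isRepresentation A v := ⟨Φ, φ, hΦ⟩
  have hΨ : aeval Ψ Φ.charpoly = 0 :=
    Subtype.ext ((aeval_subalgebra_coe _ _ _).trans Φ.aeval_self_charpoly)
  refine ⟨Φ.charpoly, Φ.charpoly_monic, ?_, ?_⟩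
  · rw [← Matrix.isRepresentation.eq_toEnd_of_represents A v hv Ψ hΦ, aeval_algHom_apply, hΨ,
      map_zero]
  · have hN : N.map (Ideal.Quotient.mk I) = 0 :=
      Matrix.ext fun i j => Ideal.Quotient.eq_zero_iff_mem.2 (hcI j i)
    rw [← Matrix.charpoly_map, Matrix.map_add _ (map_add _), hN, zero_add,
      Matrix.diagonal_map (map_zero _), Matrix.charpoly_diagonal]

/-- The element `b` isolates the point `s` of the fibre of `A → B` over `A ⧸ I`: it takes the
value `1` there, and modulo `I` it annihilates every function vanishing there. -/
structure IsolatesPoint {A B : Type*} [CommRing A] [CommRing B] [Algebra A B] {I : Ideal A}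
    (s : B →ₐ[A] A ⧸ I) (b : B) : Prop where
  apply_eq_one : s b = 1
  mul_mem : ∀ x, s x = 0 → b * x ∈ I.map (algebraMap A B)

variable {A B : Type*} [CommRing A] [CommRing B] [Algebra A B] {I : Ideal A}

theorem IsolatesPoint.exists_mul_sub_smul_mem {s : B →ₐ[A] A ⧸ I} {b : B}
    (hb : IsolatesPoint s b) (x : B) : ∃ a : A, b * x - a • b ∈ I.map (algebraMap A B) := by
  obtain ⟨a, ha⟩ := Ideal.Quotient.mk_surjective (s x)
  have hx : s (x - algebraMap A B a) = 0 := by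
    rw [map_sub, AlgHom.commutes, ← ha, Ideal.Quotient.algebraMap_eq, sub_self]
  refine ⟨a, ?_⟩
  simpa only [mul_sub, Algebra.smul_def, mul_comm b (algebraMap A B a)] using hb.mul_mem _ hx

theorem IsolatesPoint.exists_monic_aeval_eq_zero [Module.Finite A B]
    (hI : I ≤ Ideal.jacobson ⊥) {s : B →ₐ[A] A ⧸ I} {b : B} (hb : IsolatesPoint s b) :
    ∃ (n : ℕ) (f : A[X]), f.Monic ∧ aeval b f = 0 ∧
      f.map (Ideal.Quotient.mk I) = (X - 1) * X ^ n := by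
  obtain ⟨n, y, hy⟩ := Module.Finite.exists_fin (R := A) (M := B)
  have hmem {x : B} (hx : x ∈ I.map (algebraMap A B)) : x ∈ I • (⊤ : Submodule A B) := by
    rwa [Ideal.smul_top_eq_map]
  have hbb : b * (b - 1) ∈ I.map (algebraMap A B) :=
    hb.mul_mem _ (by rw [map_sub, map_one, hb.apply_eq_one, sub_self])
  -- Modulo `I`, multiplication by `b` fixes the first generator and kills the others.
  let v : Option (Fin n) → B := fun o => o.elim b fun i => (1 - b) * y i
  let d : Option (Fin n) → A := fun o => o.elim 1 fun _ => 0
  have hspan : Submodule.span A (Set.range v) = ⊤ := by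
    refine top_le_iff.1 (Submodule.le_of_le_smul_of_le_jacobson_bot Module.Finite.fg_top hI ?_)
    nth_rw 1 [← hy]
    rw [Submodule.span_le]
    rintro _ ⟨i, rfl⟩
    obtain ⟨a, ha⟩ := hb.exists_mul_sub_smul_mem (y i)
    have hyi : y i = (a • v none + v (some i)) + (b * y i - a • b) := by
      simp only [v, Option.elim]; ring
    rw [SetLike.mem_coe, hyi]
    exact Submodule.add_mem_sup (add_mem (Submodule.smul_mem _ _ (Submodule.subset_span ⟨_, rfl⟩))
      (Submodule.subset_span ⟨_, rfl⟩)) (hmem ha)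
  have hdiag : ∀ j, Algebra.lmul A B b (v j) - d j • v j ∈ I • (⊤ : Submodule A B) := by
    rintro (_ | i)
    · simpa [v, d, mul_sub] using hmem hbb
    · have : b * ((1 - b) * y i) = -y i * (b * (b - 1)) := by ring
      simpa [v, d, this] using hmem (Ideal.mul_mem_left _ (y i) hbb)
  obtain ⟨f, hf, hfb, hfI⟩ := exists_monic_aeval_eq_zero_of_sub_smul_mem I v hspan d _ hdiag
  refine ⟨n, f, hf, ?_, by simpa [Fintype.prod_option, d] using hfI⟩
  rw [aeval_algHom_apply] at hfb
  simpa using congr($hfb 1)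

theorem exists_isIdempotentElem_of_isRoot_of_aeval_eq_zero {f : A[X]} {α : A} (hα : f.IsRoot α)
    (hα' : IsUnit (f.derivative.eval α)) {b : B} (hb : aeval b f = 0) :
    ∃ e : B, IsIdempotentElem e ∧ b * e = α • e ∧ b - algebraMap A B α ∣ e - 1 := by
  obtain ⟨g, rfl⟩ := dvd_iff_isRoot.2 hα
  obtain ⟨u, hu⟩ : IsUnit (g.eval α) := by simpa [derivative_mul] using hα'
  obtain ⟨r, hr⟩ := X_sub_C_dvd_sub_C_eval (a := α) (p := g)
  have hunit : algebraMap A B (↑u⁻¹ : A) * algebraMap A B (g.eval α) = 1 := by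
    rw [← map_mul, ← hu, Units.inv_mul, map_one]
  have hbg : (b - algebraMap A B α) * aeval b g = 0 := by simpa using hb
  have hgr : aeval b g - algebraMap A B (g.eval α) = (b - algebraMap A B α) * aeval b r := by
    simpa using congr(aeval b $hr)
  refine ⟨algebraMap A B ↑u⁻¹ * aeval b g, ?_, ?_, algebraMap A B ↑u⁻¹ * aeval b r, ?_⟩
  · unfold IsIdempotentElem
    linear_combination algebraMap A B ↑u⁻¹ ^ 2 * aeval b g * hgr
      + algebraMap A B ↑u⁻¹ ^ 2 * aeval b r * hbg + algebraMap A B ↑u⁻¹ * aeval b g * hunit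
  · rw [Algebra.smul_def]
    linear_combination algebraMap A B ↑u⁻¹ * hbg
  · linear_combination algebraMap A B ↑u⁻¹ * hgr + hunit

theorem IsolatesPoint.exists_isIdempotentElem_mul_eq_units_smul [HenselianRing A I]
    [Module.Finite A B] {s : B →ₐ[A] A ⧸ I} {b : B} (hb : IsolatesPoint s b) :
    ∃ (α : Aˣ) (e : B), IsIdempotentElem e ∧ s e = 1 ∧ b * e = α • e := by
  have hI : I ≤ Ideal.jacobson ⊥ := HenselianRing.jac
  have := isLocalHom_of_le_jacobson_bot I hI
  obtain ⟨n, f, hf, hfb, hfI⟩ := hb.exists_monic_aeval_eq_zero hI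
  have hroot : Ideal.Quotient.mk I (f.eval 1) = 0 := by
    rw [← eval_map_apply, hfI]; simp
  have hder {a : A} (ha : Ideal.Quotient.mk I a = 1) :
      Ideal.Quotient.mk I (f.derivative.eval a) = 1 := by
    rw [← eval_map_apply, ← derivative_map, hfI, ha]; simp
  obtain ⟨α, hα, hα1⟩ := HenselianRing.is_henselian f hf 1
    (Ideal.Quotient.eq_zero_iff_mem.1 hroot) (by rw [hder (map_one _)]; exact isUnit_one)
  have hα1 : Ideal.Quotient.mk I α = 1 := by rw [Ideal.Quotient.eq.2 hα1, map_one]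
  have hunit {a : A} (ha : Ideal.Quotient.mk I a = 1) : IsUnit a :=
    .of_map (Ideal.Quotient.mk I) a (ha ▸ isUnit_one)
  obtain ⟨e, he, hbe, q, hq⟩ :=
    exists_isIdempotentElem_of_isRoot_of_aeval_eq_zero hα (hunit (hder hα1)) hfb
  refine ⟨(hunit hα1).unit, e, he, ?_, hbe⟩
  simpa [hb.apply_eq_one, hα1, sub_eq_zero] using congr(s $hq)

theorem IsolatesPoint.exists_mul_eq_smul [Module.Finite A B] (hI : I ≤ Ideal.jacobson ⊥)
    {s : B →ₐ[A] A ⧸ I} {b : B} (hb : IsolatesPoint s b) {α : Aˣ} {e : B} (he : b * e = α • e)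
    (x : B) : ∃ a : A, e * x = a • e := by
  let N : Submodule A B := LinearMap.range (LinearMap.mulLeft A e)
  have hIN {x : B} (hx : x ∈ I.map (algebraMap A B)) : e * x ∈ I • N := by
    have : e * x ∈ (I • (⊤ : Submodule A B)).map (LinearMap.mulLeft A e) :=
      ⟨x, by rwa [Ideal.smul_top_eq_map], rfl⟩
    rwa [Submodule.map_smul'', Submodule.map_top] at this
  have hN : N ≤ Submodule.span A {e} := by
    refine Submodule.le_of_le_smul_of_le_jacobson_bot (Module.Finite.iff_fg.1 inferInstance) hI ?_
    rintro _ ⟨x, rfl⟩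
    obtain ⟨a, ha⟩ := hb.exists_mul_sub_smul_mem x
    have hex : e * (b * x - a • b) = α • (e * x - a • e) := by
      rw [mul_sub, mul_smul_comm, ← mul_assoc, mul_comm e b, he, smul_mul_assoc, smul_sub,
        smul_comm a α]
    have hx : e * x = a • e + α⁻¹ • (e * (b * x - a • b)) := by
      rw [hex, inv_smul_smul, add_sub_cancel]
    rw [LinearMap.mulLeft_apply, hx]
    exact Submodule.add_mem_sup (Submodule.smul_mem _ _ (Submodule.mem_span_singleton_self e))
      (Submodule.smul_mem _ _ (hIN ha))
  exact (Submodule.mem_span_singleton.1 (hN ⟨x, rfl⟩)).imp fun a ha => ha.symm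

theorem IsolatesPoint.exists_isIdempotentElem [HenselianRing A I] [Module.Finite A B]
    {s : B →ₐ[A] A ⧸ I} {b : B} (hb : IsolatesPoint s b) :
    ∃ e : B, IsIdempotentElem e ∧ s e = 1 ∧ ∀ x, ∃ a : A, e * x = a • e := by
  obtain ⟨α, e, he, hse, hbe⟩ := hb.exists_isIdempotentElem_mul_eq_units_smul
  exact ⟨e, he, hse, hb.exists_mul_eq_smul HenselianRing.jac hbe⟩

end FiniteAlgebras

section ZariskisMainTheorem

variable {A S : Type*} [CommRing A] [CommRing S] [Algebra A S] [Algebra.FiniteType A S]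

theorem exists_ideal_integralClosure_map_eq_top [Algebra.QuasiFinite A S] :
    ∃ K : Ideal (integralClosure A S), K.map (algebraMap (integralClosure A S) S) = ⊤ ∧
      ∀ c ∈ K, ∀ x : S, ∃ m : ℕ, IsIntegral A ((c : S) ^ m * x) := by
  let K : Ideal (integralClosure A S) :=
    ⨅ x : S, ((1 : Submodule (integralClosure A S) S).colon {x}).radical
  have hK (c : integralClosure A S) :
      c ∈ K ↔ ∀ x : S, ∃ m : ℕ, IsIntegral A ((c : S) ^ m * x) := by
    simp only [K, Submodule.mem_iInf, Ideal.mem_radical_iff, Submodule.mem_colon_singleton,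
      Submodule.mem_one]
    refine forall_congr' fun x => exists_congr fun m => ?_
    exact ⟨fun ⟨y, hy⟩ => (congrArg (IsIntegral A) hy).mp y.2, fun h => ⟨⟨_, h⟩, rfl⟩⟩
  refine ⟨K, ?_, fun c hc => (hK c).1 hc⟩
  by_contra hne
  obtain ⟨p, hp, hle⟩ := Ideal.exists_le_maximal _ hne
  have := hp.isPrime
  obtain ⟨r, hrp, hr, hrS⟩ := Algebra.zariskisMainProperty_iff.1
    (Algebra.ZariskisMainProperty.of_finiteType (R := A) p)
  exact hrp (hle (Ideal.mem_map_of_mem (algebraMap (integralClosure A S) S)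
    (x := ⟨r, hr⟩) ((hK _).2 hrS)))

theorem exists_apply_eq_one_and_isIntegral_pow_mul [Algebra.QuasiFinite A S] {D : Type*}
    [CommRing D] [Algebra A D] (hD : Function.Surjective (algebraMap A D)) (s : S →ₐ[A] D) :
    ∃ c : S, s c = 1 ∧ ∀ x : S, ∃ m : ℕ, IsIntegral A (c ^ m * x) := by
  obtain ⟨K, hK, hKint⟩ := exists_ideal_integralClosure_map_eq_top (A := A) (S := S)
  let t : integralClosure A S →+* D := s.toRingHom.comp (algebraMap (integralClosure A S) S)
  have ht : Function.Surjective t := fun d => by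
    obtain ⟨a, rfl⟩ := hD d
    exact ⟨algebraMap A _ a, s.commutes a⟩
  have hKt : (1 : D) ∈ K.map t := by
    rw [← Ideal.map_map, hK, Ideal.map_top]
    exact Submodule.mem_top
  obtain ⟨c, hc, hc1⟩ := (Ideal.mem_map_iff_of_surjective t ht).1 hKt
  exact ⟨c, hc1, hKint c hc⟩

theorem exists_finite_subalgebra_of_isIntegral_pow_mul {c : S}
    (hc : ∀ x : S, ∃ m : ℕ, IsIntegral A (c ^ m * x)) :
    ∃ B : Subalgebra A S, Module.Finite A B ∧ c ∈ B ∧ ∀ x : S, ∃ m : ℕ, c ^ m * x ∈ B := by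
  obtain ⟨G, hG⟩ := Algebra.FiniteType.out (R := A) (A := S)
  have hcint : IsIntegral A c := by
    obtain ⟨n, hn⟩ := hc c
    exact (IsIntegral.pow_iff n.succ_pos).1 (pow_succ c n ▸ hn)
  choose m hm using hc
  let t : Set S := insert c ((fun x => c ^ m x * x) '' G)
  have hct : c ∈ Algebra.adjoin A t := Algebra.subset_adjoin (Set.mem_insert _ _)
  have hsat : (Algebra.adjoin A t).saturation (.powers c) (Submonoid.powers_le.2 hct) = ⊤ := by
    rw [← top_le_iff, ← hG, Algebra.adjoin_le_iff]
    exact fun x hx =>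
      ⟨_, ⟨m x, rfl⟩, Algebra.subset_adjoin (Set.mem_insert_of_mem _ ⟨x, hx, rfl⟩)⟩
  refine ⟨Algebra.adjoin A t, .of_fg (fg_adjoin_of_finite ?_ ?_), hct, fun x => ?_⟩
  · exact (G.finite_toSet.image _).insert c
  · rintro _ (rfl | ⟨x, -, rfl⟩)
    exacts [hcint, hm x]
  · obtain ⟨_, ⟨k, rfl⟩, hk⟩ : x ∈ (Algebra.adjoin A t).saturation (.powers c)
        (Submonoid.powers_le.2 hct) := hsat ▸ Algebra.mem_top
    exact ⟨k, hk⟩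

end ZariskisMainTheorem

section Descent

variable {A S : Type*} [CommRing A] [CommRing S] [Algebra A S] {B : Subalgebra A S} {c : B}

theorem exists_mem_map_eq_pow_mul (hc : ∀ x : S, ∃ m : ℕ, (c : S) ^ m * x ∈ B) (I : Ideal A)
    {x : S} (hx : x ∈ I.map (algebraMap A S)) :
    ∃ m : ℕ, ∃ y ∈ I.map (algebraMap A B), (y : S) = (c : S) ^ m * x := by
  have hx' : x ∈ I • (⊤ : Submodule A S) := by rwa [Ideal.smul_top_eq_map]
  refine Submodule.smul_induction_on hx' ?_ ?_
  · intro a ha x _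
    obtain ⟨m, hm⟩ := hc x
    refine ⟨m, algebraMap A B a * ⟨_, hm⟩,
      Ideal.mul_mem_right _ _ (Ideal.mem_map_of_mem _ ha), ?_⟩
    rw [Algebra.smul_def, mul_left_comm]
    rfl
  · rintro x₁ x₂ ⟨m, y₁, hy₁, h₁⟩ ⟨n, y₂, hy₂, h₂⟩
    refine ⟨m + n, c ^ n * y₁ + c ^ m * y₂,
      add_mem (Ideal.mul_mem_left _ _ hy₁) (Ideal.mul_mem_left _ _ hy₂), ?_⟩
    push_cast
    rw [h₁, h₂]; ring

variable {I : Ideal A} {s : S →ₐ[A] A ⧸ I}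

theorem IsolatesPoint.exists_restrict (hc : ∀ x : S, ∃ m : ℕ, (c : S) ^ m * x ∈ B)
    (hsc : s c = 1) {g : S} (hg : IsolatesPoint s g) :
    ∃ b : B, IsolatesPoint (s.comp B.val) b := by
  obtain ⟨m, hm⟩ := hc g
  let c₁ : B := ⟨_, hm⟩
  have hc₁ {x : S} (hx : s x = 0) : (c₁ : S) * x ∈ I.map (algebraMap A S) := by
    rw [mul_assoc]
    exact Ideal.mul_mem_left _ _ (hg.mul_mem x hx)
  obtain ⟨k, y, hy, hyk⟩ := exists_mem_map_eq_pow_mul hc I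
    (hc₁ (x := c - 1) (by rw [map_sub, map_one, hsc, sub_self]))
  -- Modulo `I`, `c` fixes `c ^ k * c₁`, so this element absorbs the power of `c`, depending on
  -- `x`, that clears the denominators below.
  have hfix : c ^ k * c₁ * (c - 1) ∈ I.map (algebraMap A B) := by
    convert hy
    exact Subtype.ext (by push_cast; rw [hyk, mul_assoc])
  refine ⟨c ^ k * c₁, ?_, fun x hx => ?_⟩
  · simp [c₁, hsc, hg.apply_eq_one]
  obtain ⟨l, z, hz, hzl⟩ := exists_mem_map_eq_pow_mul hc I (hc₁ hx)
  have hz' : z = c ^ l * (c₁ * x) := Subtype.ext hzl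
  obtain ⟨q, hq⟩ := sub_one_dvd_pow_sub_one c l
  have : c ^ k * c₁ * x = c ^ k * z - c ^ k * c₁ * (c - 1) * (q * x) := by
    rw [hz']; linear_combination -c ^ k * c₁ * x * hq
  rw [this]
  exact sub_mem (Ideal.mul_mem_left _ _ hz) (Ideal.mul_mem_right _ _ hfix)

theorem exists_mul_eq_smul_of_subalgebra (hc : ∀ x : S, ∃ m : ℕ, (c : S) ^ m * x ∈ B)
    (hI : I ≤ Ideal.jacobson ⊥) (hsc : s c = 1) {e : B} (hse : s e = 1)
    (he : ∀ y : B, ∃ a : A, e * y = a • e) (x : S) : ∃ a : A, (e : S) * x = a • (e : S) := by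
  have := isLocalHom_of_le_jacobson_bot I hI
  have heS (y : B) : ∃ a : A, (e : S) * y = a • (e : S) :=
    (he y).imp fun a ha => congrArg B.val ha
  obtain ⟨u, hu⟩ := heS c
  have hu1 : Ideal.Quotient.mk I u = 1 := by
    have := congr(s $hu)
    rw [map_mul, hse, hsc, one_mul, map_smul, hse] at this
    exact (mul_one _).symm.trans this.symm
  obtain ⟨w, hw⟩ : IsUnit u := .of_map (Ideal.Quotient.mk I) u (hu1 ▸ isUnit_one)
  obtain ⟨m, hm⟩ := hc x
  obtain ⟨a, ha⟩ := heS ⟨_, hm⟩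
  have hpow (m : ℕ) : (e : S) * c ^ m = u ^ m • (e : S) := by
    induction m with
    | zero => rw [pow_zero, pow_zero, mul_one, one_smul]
    | succ m ih => rw [pow_succ, ← mul_assoc, ih, smul_mul_assoc, hu, pow_succ, mul_smul]
  refine ⟨↑(w⁻¹ ^ m) * a, ?_⟩
  rw [mul_smul, ← ha, ← mul_assoc, hpow, smul_mul_assoc, smul_smul, ← hw,
    ← Units.val_pow_eq_pow_val, ← Units.val_mul, inv_pow, inv_mul_cancel, Units.val_one, one_smul]

end Descent

section FormallyUnramified

open TensorProduct

variable {R S : Type*} [CommRing R] [CommRing S] [Algebra R S] [Algebra.FormallyUnramified R S]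
  [Algebra.EssFiniteType R S]

theorem exists_isolatesPoint {I : Ideal R} (s : S →ₐ[R] R ⧸ I) : ∃ g : S, IsolatesPoint s g := by
  let J : Ideal S := I.map (algebraMap R S)
  let i : R ⧸ I →ₐ[R] S ⧸ J := Ideal.quotientMapₐ J (Algebra.ofId R S) Ideal.le_comap_map
  have hsJ : ∀ x ∈ J, s x = 0 := Ideal.map_le_iff_le_comap (K := RingHom.ker s).2 fun a ha => by
    rw [Ideal.mem_comap, RingHom.mem_ker, AlgHom.commutes]
    exact Ideal.Quotient.eq_zero_iff_mem.2 ha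
  let π : S ⧸ J →ₐ[R] R ⧸ I := Ideal.Quotient.liftₐ J s hsJ
  let w : S ⊗[R] S →ₐ[R] S ⧸ J :=
    Algebra.TensorProduct.lift (i.comp s) (Ideal.Quotient.mkₐ R J) fun _ _ => Commute.all _ _
  have hπi : π.comp i = AlgHom.id R (R ⧸ I) :=
    AlgHom.cancel_right (Ideal.Quotient.mkₐ_surjective R I) |>.1 (by ext)
  have hπmk (x : S) : π (Ideal.Quotient.mk J x) = s x := rfl
  have hπw : π.comp w = s.comp (Algebra.TensorProduct.lmul' R) := by
    ext x
    · simpa [w] using congr($hπi (s x))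
    · simp [w, hπmk]
  obtain ⟨g, hg⟩ := Ideal.Quotient.mk_surjective (w (Algebra.FormallyUnramified.elem R S))
  refine ⟨g, ?_, fun x hx => ?_⟩
  · have := congr($hπw (Algebra.FormallyUnramified.elem R S))
    rwa [AlgHom.comp_apply, AlgHom.comp_apply, Algebra.FormallyUnramified.lmul_elem, map_one,
      ← hg] at this
  · have := congr(w $(Algebra.FormallyUnramified.one_tmul_mul_elem (R := R) x))
    rw [map_mul, map_mul, ← hg] at this
    rw [← Ideal.Quotient.eq_zero_iff_mem, map_mul, mul_comm]
    simpa [w, hx] using this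

theorem eq_of_mkₐ_comp_eq {C : Type*} [CommRing C] [Algebra R C] {J : Ideal C}
    (hJ : J ≤ Ideal.jacobson ⊥) {u v : S →ₐ[R] C}
    (huv : (Ideal.Quotient.mkₐ R J).comp u = (Ideal.Quotient.mkₐ R J).comp v) : u = v := by
  have := isLocalHom_of_le_jacobson_bot J hJ
  let w : S ⊗[R] S →ₐ[R] C := Algebra.TensorProduct.lift u v fun _ _ => Commute.all _ _
  have hw : (Ideal.Quotient.mkₐ R J).comp w =
      ((Ideal.Quotient.mkₐ R J).comp u).comp (Algebra.TensorProduct.lmul' R) := by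
    ext x
    · simp [w]
    · simpa [w] using congr($huv.symm x)
  have hunit : IsUnit (w (Algebra.FormallyUnramified.elem R S)) := by
    refine .of_map (Ideal.Quotient.mk J) _ ?_
    have := congr($hw (Algebra.FormallyUnramified.elem R S))
    rw [AlgHom.comp_apply, AlgHom.comp_apply, Algebra.FormallyUnramified.lmul_elem,
      map_one] at this
    exact this ▸ isUnit_one
  ext x
  refine hunit.mul_right_cancel ?_
  have := congr(w $(Algebra.FormallyUnramified.one_tmul_mul_elem (R := R) x))
  simpa [w] using this.symm

end FormallyUnramified

section HenselianLifting

open TensorProduct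

theorem exists_algHom_of_isIdempotentElem_of_mul_eq_smul {A S : Type*} [CommRing A] [CommRing S]
    [Algebra A S] [Algebra.Etale A S] {I : Ideal A} (hI : I ≤ Ideal.jacobson ⊥)
    {s : S →ₐ[A] A ⧸ I} {e : S} (he : IsIdempotentElem e) (hse : s e = 1)
    (heS : ∀ x : S, ∃ a : A, e * x = a • e) :
    ∃ φ : S →ₐ[A] A, (Ideal.Quotient.mkₐ A I).comp φ = s := by
  let T := Localization.Away e
  have : Algebra.Etale S T := Algebra.Etale.of_isLocalizationAway e
  have : Algebra.Etale A T := Algebra.Etale.comp A S T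
  have he1 : algebraMap S T e = 1 :=
    (IsLocalization.Away.algebraMap_isUnit e).mul_left_cancel (by rw [← map_mul, he, mul_one])
  have hsurj : Function.Surjective (algebraMap A T) := by
    intro t
    obtain ⟨n, x, hx⟩ := IsLocalization.Away.surj e t
    obtain ⟨a, ha⟩ := heS x
    refine ⟨a, ?_⟩
    have := congr(algebraMap S T $ha)
    rw [Algebra.smul_def, map_mul, map_mul, he1, one_mul, mul_one,
      ← IsScalarTower.algebraMap_apply] at this
    rw [← this, ← hx, he1, one_pow, mul_one]
  let σ : T →ₐ[A] A ⧸ I := IsLocalization.liftAlgHom (M := .powers e) (f := s)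
    (by rintro ⟨_, n, rfl⟩; simp [hse])
  have hker : RingHom.ker (algebraMap A T) ≤ I := fun a ha => by
    have := σ.commutes a
    rw [RingHom.mem_ker.1 ha, map_zero] at this
    exact Ideal.Quotient.eq_zero_iff_mem.1 this.symm
  have hbot : RingHom.ker (algebraMap A T) = ⊥ :=
    Submodule.eq_bot_of_le_smul_of_le_jacobson_bot I _
      (Algebra.FinitePresentation.ker_fG_of_surjective (Algebra.ofId A T) hsurj)
      (((Algebra.FormallyEtale.iff_of_surjective hsurj).1 inferInstance).eq.ge.trans
        (Ideal.mul_mono_left hker)) hI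
  let E : A ≃ₐ[A] T := AlgEquiv.ofBijective (Algebra.ofId A T)
    ⟨(RingHom.injective_iff_ker_eq_bot _).2 hbot, hsurj⟩
  refine ⟨E.symm.toAlgHom.comp (IsScalarTower.toAlgHom A S T), ?_⟩
  have hσ : (Ideal.Quotient.mkₐ A I).comp E.symm.toAlgHom = σ :=
    AlgHom.cancel_right hsurj (f := Algebra.ofId A T) |>.1 (by ext)
  rw [← AlgHom.comp_assoc, hσ]
  ext x
  simp [σ]

theorem exists_algHom_mkₐ_comp_eq {A S : Type*} [CommRing A] [CommRing S] [Algebra A S]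
    [Algebra.Etale A S] {I : Ideal A} [HenselianRing A I] (s : S →ₐ[A] A ⧸ I) :
    ∃ φ : S →ₐ[A] A, (Ideal.Quotient.mkₐ A I).comp φ = s := by
  have hI : I ≤ Ideal.jacobson ⊥ := HenselianRing.jac
  obtain ⟨c, hsc, hcint⟩ :=
    exists_apply_eq_one_and_isIntegral_pow_mul (Ideal.Quotient.mk_surjective (I := I)) s
  obtain ⟨B, _, hcB, hc⟩ := exists_finite_subalgebra_of_isIntegral_pow_mul hcint
  lift c to B using hcB
  obtain ⟨g, hg⟩ := exists_isolatesPoint s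
  obtain ⟨b, hb⟩ := hg.exists_restrict hc hsc
  obtain ⟨e, he, hse, heB⟩ := hb.exists_isIdempotentElem
  exact exists_algHom_of_isIdempotentElem_of_mul_eq_smul hI (he.map B.val) hse
    (exists_mul_eq_smul_of_subalgebra hc hI hsc hse heB)

theorem bijective_mkₐ_comp {R S C : Type*} [CommRing R] [CommRing S] [Algebra R S] [CommRing C]
    [Algebra R C] [Algebra.Etale R S] (J : Ideal C) [HenselianRing C J] :
    Function.Bijective ((Ideal.Quotient.mkₐ R J).comp : (S →ₐ[R] C) → (S →ₐ[R] C ⧸ J)) := by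
  refine ⟨fun u v => eq_of_mkₐ_comp_eq HenselianRing.jac, fun s => ?_⟩
  obtain ⟨φ, hφ⟩ := exists_algHom_mkₐ_comp_eq (AlgHom.liftEquiv R C S (C ⧸ J) s)
  refine ⟨(AlgHom.liftEquiv R C S C).symm φ, ?_⟩
  ext x
  simpa using congr($hφ (1 ⊗ₜ x))

end HenselianLifting

section IsoModIdeal

variable {R S : Type*} [CommRing R] [CommRing S] [Algebra R S] {I : Ideal R}

theorem existsUnique_ringHom_of_map_eq_zero
    (hiso : Function.Bijective (Ideal.quotientMap (I.map (algebraMap R S)) (algebraMap R S)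
      Ideal.le_comap_map))
    {D : Type*} [CommRing D] (f : R →+* D) (hf : ∀ a ∈ I, f a = 0) :
    ∃! g : S →+* D, g.comp (algebraMap R S) = f := by
  let e := RingEquiv.ofBijective _ hiso
  have he (r : R) : e (Ideal.Quotient.mk I r) = Ideal.Quotient.mk _ (algebraMap R S r) := rfl
  refine ⟨((Ideal.Quotient.lift I f hf).comp e.symm.toRingHom).comp (Ideal.Quotient.mk _), ?_, ?_⟩
  · ext r
    simp [← he]
  · rintro g rfl
    have hg : I.map (algebraMap R S) ≤ RingHom.ker g := by
      rwa [Ideal.map_le_iff_le_comap]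
    ext x
    obtain ⟨q, hq⟩ := e.surjective (Ideal.Quotient.mk _ x)
    obtain ⟨r, rfl⟩ := Ideal.Quotient.mk_surjective q
    have hx : g x = g (algebraMap R S r) := by
      rw [← sub_eq_zero, ← map_sub, ← RingHom.mem_ker]
      exact hg (Ideal.Quotient.eq.1 (hq.symm.trans (he r)))
    simp [← hq, hx]

theorem existsUnique_ringHom_of_henselianRing [Algebra.Etale R S]
    (hiso : Function.Bijective (Ideal.quotientMap (I.map (algebraMap R S)) (algebraMap R S)
      Ideal.le_comap_map))
    {C : Type*} [CommRing C] (J : Ideal C) [HenselianRing C J] (f : R →+* C) (hf : I.map f ≤ J) :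
    ∃! g : S →+* C, g.comp (algebraMap R S) = f := by
  let : Algebra R C := f.toAlgebra
  obtain ⟨s, hs, hs_unique⟩ := existsUnique_ringHom_of_map_eq_zero hiso (algebraMap R (C ⧸ J))
    (fun r hr => Ideal.Quotient.eq_zero_iff_mem.2 (hf (Ideal.mem_map_of_mem f hr)))
  obtain ⟨φ, hφ⟩ := (bijective_mkₐ_comp J).2 (⟨s, RingHom.congr_fun hs⟩ : S →ₐ[R] C ⧸ J)
  refine ⟨φ, φ.comp_algebraMap, fun g hg => ?_⟩
  let ψ : S →ₐ[R] C := ⟨g, RingHom.congr_fun hg⟩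
  have hψ : (Ideal.Quotient.mkₐ R J).comp ψ = (Ideal.Quotient.mkₐ R J).comp φ := by
    rw [hφ]
    exact AlgHom.coe_ringHom_injective (hs_unique _ (AlgHom.comp_algebraMap _))
  exact congrArg RingHomClass.toRingHom ((bijective_mkₐ_comp J).1 hψ)

end IsoModIdeal

/-- Henselization is insensitive to étale extensions that are isomorphisms modulo the ideal:
if `S` is étale over `R` with `R/I ≅ S/IS` and `ρ : R → H` is a Henselization of `(R, I)`,
then `ρ` factors through `S` via a map exhibiting `H` as a Henselization of `(S, I·S)`. -/
theorem isHenselization_of_etale_iso_mod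
    {R S H : Type u} [CommRing R] [CommRing S] [Algebra R S] [CommRing H]
    (I : Ideal R) [Algebra.Etale R S]
    (hiso : Function.Bijective (Ideal.quotientMap (I.map (algebraMap R S)) (algebraMap R S)
      Ideal.le_comap_map))
    (ρ : R →+* H) (hρ : IsHenselization I ρ) :
    ∃ σ : S →+* H, σ.comp (algebraMap R S) = ρ ∧
      IsHenselization (I.map (algebraMap R S)) σ := by
  obtain ⟨hH, hρ_univ⟩ := hρ
  obtain ⟨σ, hσ, -⟩ := existsUnique_ringHom_of_henselianRing hiso (I.map ρ) ρ le_rfl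
  refine ⟨σ, hσ, by rwa [Ideal.map_map, hσ], fun C _ J hC f hf => ?_⟩
  rw [Ideal.map_map] at hf
  obtain ⟨g, hg, hg_unique⟩ := hρ_univ C J hC (f.comp (algebraMap R S)) hf
  refine ⟨g, ?_, fun g' hg' => hg_unique g' ?_⟩
  · refine (existsUnique_ringHom_of_henselianRing hiso J _ hf).unique ?_ rfl
    rw [RingHom.comp_assoc, hσ, hg]
  · rw [← hσ]
    exact congrArg (RingHom.comp · (algebraMap R S)) hg'
end
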